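/- arXiv:math/0309201 — 3 statements merged into one kernel-verified Lean document; each statement's English description precedes it below -/
import Mathlib

section
/- For |q|<1, the identity 1 - 5·∑_{n≥1} (n/5)·n·q^n/(1-q^n) = (q;q)_∞^5/(q^5;q^5)_∞ holds, where (n/5) is the Legendre symbol mod 5 and (a;q)_∞ = ∏_{k≥0}(1-a q^k). -/
open scoped BigOperators

instance : Fact (Nat.Prime 5) := ⟨by norm_num⟩

/-!
For `W(x) = ∑_{n ∈ ℤ} x qⁿ / (1 - x qⁿ)²`, the difference `W(a) - W(b)` is a theta quotient in `a`:
both sides are `q`-periodic with the same double pole at `a = 1`, and a simple pole is excluded by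
the symmetry `a ↦ a⁻¹`, so their difference is holomorphic and `q`-periodic, hence constant by the
maximum modulus principle, and it vanishes at `a = b`. Now take `a = ζ` and `b = ζ²` for a primitive
fifth root of unity `ζ`. Expanding the poles geometrically turns the left side into the Lambert
series weighted by the Legendre symbol, through the Gauss sum modulo 5, while the theta quotient
collapses to `(q; q)_∞⁵ / (q⁵; q⁵)_∞`. Both sides carry the nonzero factor
`ζ / (1 - ζ)² - ζ² / (1 - ζ²)²`.
-/

open Filter Topology Set

section QPochhammer

variable {𝕜 : Type*} [NormedField 𝕜]

/-- The infinite `q`-Pochhammer symbol `(a; q)_∞`. -/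
noncomputable def qPochhammer (a q : 𝕜) : 𝕜 := ∏' n : ℕ, (1 - a * q ^ n)

lemma tprod_one_sub_pow_succ (q : 𝕜) : ∏' n : ℕ, (1 - q ^ (n + 1)) = qPochhammer q q := by
  simp only [qPochhammer, pow_succ']

lemma summable_norm_neg_mul_pow {q : 𝕜} (hq : ‖q‖ < 1) (a : 𝕜) :
    Summable fun n : ℕ ↦ ‖-(a * q ^ n)‖ := by
  simpa using (summable_geometric_of_lt_one (norm_nonneg q) hq).mul_left ‖a‖

variable [CompleteSpace 𝕜] {q : 𝕜}

lemma multipliable_one_sub_mul_pow (hq : ‖q‖ < 1) (a : 𝕜) :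
    Multipliable fun n : ℕ ↦ 1 - a * q ^ n := by
  simpa [sub_eq_add_neg] using multipliable_one_add_of_summable (summable_norm_neg_mul_pow hq a)

lemma qPochhammer_eq_one_sub_mul (hq : ‖q‖ < 1) (a : 𝕜) :
    qPochhammer a q = (1 - a) * qPochhammer (q * a) q := by
  have hshift (n : ℕ) : 1 - q * a * q ^ n = 1 - a * q ^ (n + 1) := by ring
  have hmul := (multipliable_one_sub_mul_pow hq (q * a)).congr hshift
  simpa [qPochhammer, hshift] using tprod_eq_zero_mul' (f := fun n : ℕ ↦ 1 - a * q ^ n) hmul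

lemma qPochhammer_ne_zero (hq : ‖q‖ < 1) {a : 𝕜} (ha : ‖a‖ < 1) : qPochhammer a q ≠ 0 := by
  have hfactor (n : ℕ) : 1 + -(a * q ^ n) ≠ 0 := by
    have hlt : ‖a * q ^ n‖ < 1 := by
      rw [norm_mul, norm_pow]
      exact (mul_le_of_le_one_right (norm_nonneg a)
        (pow_le_one₀ (norm_nonneg q) hq.le)).trans_lt ha
    rw [← sub_eq_add_neg, sub_ne_zero]
    exact ne_of_apply_ne norm (by simpa using hlt.ne')
  simpa [qPochhammer, sub_eq_add_neg] using
    tprod_one_add_ne_zero_of_summable hfactor (summable_norm_neg_mul_pow hq a)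

lemma prod_qPochhammer_pow_mul (hq : ‖q‖ < 1) {ζ : 𝕜} {n : ℕ} (hn : 0 < n)
    (hζ : IsPrimitiveRoot ζ n) (a : 𝕜) :
    ∏ i ∈ Finset.range n, qPochhammer (ζ ^ i * a) q = qPochhammer (a ^ n) (q ^ n) := by
  have hroots (x : 𝕜) : 1 - x ^ n = ∏ i ∈ Finset.range n, (1 - ζ ^ i * x) := by
    classical
    rw [← one_pow n, hζ.pow_sub_pow_eq_prod_sub_mul _ _ hn, Polynomial.nthRootsFinset_def,
      Finset.prod, Multiset.toFinset_val, hζ.nthRoots_one_nodup.dedup, hζ.nthRoots_eq (one_pow n)]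
    simp [Finset.prod]
  simp only [qPochhammer]
  rw [← Multipliable.tprod_finsetProd fun i _ ↦ multipliable_one_sub_mul_pow hq (ζ ^ i * a)]
  simp only [mul_assoc, ← hroots, mul_pow, pow_right_comm]

lemma differentiable_qPochhammer {q : ℂ} (hq : ‖q‖ < 1) :
    Differentiable ℂ fun a ↦ qPochhammer a q := by
  have hprod : HasProdLocallyUniformlyOn (fun (n : ℕ) a ↦ 1 + -(a * q ^ n))
      (fun a ↦ ∏' n : ℕ, (1 + -(a * q ^ n))) univ := by
    refine hasProdLocallyUniformlyOn_of_forall_compact isOpen_univ fun K _ hK ↦ ?_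
    obtain ⟨C, hC⟩ := hK.isBounded.exists_norm_le
    refine ((summable_geometric_of_lt_one (norm_nonneg q) hq).mul_left C
      ).hasProdUniformlyOn_nat_one_add hK (.of_forall fun n a ha ↦ ?_) fun _ ↦ by fun_prop
    rw [norm_neg, norm_mul, norm_pow]
    gcongr
    exact hC a ha
  have hdiff := hprod.differentiableOn (.of_forall fun _ ↦ by
    simpa [Finset.prod_fn] using DifferentiableOn.finsetProd (fun _ _ ↦ by fun_prop)) isOpen_univ
  simpa only [qPochhammer, sub_eq_add_neg] using! differentiableOn_univ.1 hdiff

end QPochhammer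

section Theta

variable {𝕜 : Type*} [NormedField 𝕜]

/-- The modified theta function `θ(x; q) = (x; q)_∞ (q / x; q)_∞`. -/
noncomputable def qTheta (x q : 𝕜) : 𝕜 := qPochhammer x q * qPochhammer (q / x) q

/-- The quotient `θ(x; q) / (1 - x)`, with the removable singularity at `x = 1` filled in. -/
noncomputable def qThetaCofactor (x q : 𝕜) : 𝕜 := qPochhammer (q * x) q * qPochhammer (q / x) q

lemma qThetaCofactor_inv (x q : 𝕜) : qThetaCofactor x⁻¹ q = qThetaCofactor x q := by
  rw [qThetaCofactor, qThetaCofactor, ← div_eq_mul_inv, div_inv_eq_mul, mul_comm]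

lemma qThetaCofactor_one (q : 𝕜) : qThetaCofactor 1 q = qPochhammer q q ^ 2 := by
  rw [qThetaCofactor, mul_one, div_one, sq]

variable [CompleteSpace 𝕜] {q : 𝕜}

lemma qTheta_eq_one_sub_mul (hq : ‖q‖ < 1) (x : 𝕜) :
    qTheta x q = (1 - x) * qThetaCofactor x q := by
  rw [qTheta, qThetaCofactor, qPochhammer_eq_one_sub_mul hq x, mul_assoc]

lemma qTheta_one (hq : ‖q‖ < 1) : qTheta 1 q = 0 := by
  rw [qTheta_eq_one_sub_mul hq, sub_self, zero_mul]

lemma qTheta_inv (hq : ‖q‖ < 1) {x : 𝕜} (hx : x ≠ 0) : qTheta x⁻¹ q = -x⁻¹ * qTheta x q := by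
  rw [qTheta_eq_one_sub_mul hq, qTheta_eq_one_sub_mul hq, qThetaCofactor_inv]
  field_simp
  ring

lemma qTheta_mul_left (hq : ‖q‖ < 1) (hq0 : q ≠ 0) {x : 𝕜} (hx : x ≠ 0) :
    qTheta (q * x) q = -x⁻¹ * qTheta x q := by
  have hdiv : q / (q * x) = x⁻¹ := by field_simp
  rw [← qTheta_inv hq hx, qTheta, qTheta, hdiv, div_inv_eq_mul, mul_comm]

end Theta

section Weierstrass

/-- The rational function `x / (1 - x)²`, whose double pole at `x = 1` generates the
multiplicative Weierstrass function. -/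
noncomputable def poleTerm {K : Type*} [Field K] (x : K) : K := x / (1 - x) ^ 2

lemma poleTerm_inv {K : Type*} [Field K] (x : K) : poleTerm x⁻¹ = poleTerm x := by
  rcases eq_or_ne x 0 with rfl | hx
  · rw [inv_zero]
  rcases eq_or_ne x 1 with rfl | hx1
  · rw [inv_one]
  have hsub : 1 - x⁻¹ = -(1 - x) / x := by field_simp; ring
  have hx1' : 1 - x ≠ 0 := sub_ne_zero.2 hx1.symm
  rw [poleTerm, poleTerm, hsub]
  field_simp

variable {𝕜 : Type*} [NormedField 𝕜]

lemma norm_poleTerm_le {x : 𝕜} {r : ℝ} (hx : ‖x‖ ≤ r) (hr : r < 1) :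
    ‖poleTerm x‖ ≤ ‖x‖ / (1 - r) ^ 2 := by
  have hsub : 1 - r ≤ ‖1 - x‖ := by
    have := norm_sub_norm_le 1 x
    rw [norm_one] at this
    linarith
  have : 0 < 1 - r := sub_pos.2 hr
  rw [poleTerm, norm_div, norm_pow]
  gcongr

/-- The sum of `poleTerm (x qⁿ)` over `n ≥ 1`. -/
noncomputable def poleSum (x q : 𝕜) : 𝕜 := ∑' n : ℕ, poleTerm (x * q ^ (n + 1))

/-- The multiplicative Weierstrass function, the `q`-periodization of `poleTerm`. -/
noncomputable def qWeierstrass (x q : 𝕜) : 𝕜 := ∑' n : ℤ, poleTerm (x * q ^ n)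

lemma qWeierstrass_mul_left {q : 𝕜} (hq0 : q ≠ 0) (x : 𝕜) :
    qWeierstrass (q * x) q = qWeierstrass x q := by
  have hshift (n : ℤ) : q * x * q ^ n = x * q ^ (n + 1) := by
    rw [zpow_add_one₀ hq0]
    ring
  simp only [qWeierstrass, hshift]
  exact (Equiv.addRight (1 : ℤ)).tsum_eq fun n ↦ poleTerm (x * q ^ n)

variable [CompleteSpace 𝕜] {q : 𝕜}

lemma summable_poleTerm_mul_pow (hq : ‖q‖ < 1) (x : 𝕜) :
    Summable fun n : ℕ ↦ poleTerm (x * q ^ n) := by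
  have hgeom : Summable fun n : ℕ ↦ ‖x * q ^ n‖ := by
    simpa only [norm_neg] using summable_norm_neg_mul_pow hq x
  refine .of_norm_bounded_eventually_nat (hgeom.div_const ((1 - 1 / 2) ^ 2)) ?_
  filter_upwards [hgeom.tendsto_atTop_zero.eventually_le_const one_half_pos] with n hn
  exact norm_poleTerm_le hn one_half_lt_one

lemma qWeierstrass_eq_poleTerm_add (hq : ‖q‖ < 1) (x : 𝕜) :
    qWeierstrass x q = poleTerm x + poleSum x q + poleSum x⁻¹ q := by
  have hpos (n : ℕ) : poleTerm (x * q ^ (n + 1 : ℤ)) = poleTerm (x * q ^ (n + 1)) := by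
    norm_cast
  have hneg (n : ℕ) : poleTerm (x * q ^ (-(n + 1 : ℤ))) = poleTerm (x⁻¹ * q ^ (n + 1)) := by
    rw [← poleTerm_inv, mul_inv, zpow_neg, inv_inv]
    norm_cast
  have hsum (y : 𝕜) : Summable fun n : ℕ ↦ poleTerm (y * q ^ (n + 1)) :=
    (summable_nat_add_iff (f := fun n ↦ poleTerm (y * q ^ n)) 1).2
      (summable_poleTerm_mul_pow hq y)
  have hsplit := tsum_of_add_one_of_neg_add_one (f := fun n : ℤ ↦ poleTerm (x * q ^ n))
    (by simpa only [hpos] using hsum x) (by simpa only [hneg] using hsum x⁻¹)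
  simp only [hpos, hneg, zpow_zero, mul_one] at hsplit
  rw [qWeierstrass, hsplit, poleSum, poleSum]
  ring

lemma summable_natCast_mul_mul_pow_pow (hq : ‖q‖ < 1) {x : 𝕜} (hx : ‖x * q‖ < 1) :
    Summable fun p : ℕ × ℕ ↦ (p.2 : 𝕜) * (x * q ^ (p.1 + 1)) ^ p.2 := by
  have hcol : Summable fun k : ℕ ↦ ‖(k : 𝕜) * (x * q) ^ k‖ := by
    simpa using summable_norm_pow_mul_geometric_of_norm_lt_one 1 hx
  refine .of_norm_bounded ((summable_geometric_of_lt_one (norm_nonneg q) hq).mul_of_nonneg hcol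
    (fun n ↦ by positivity) fun k ↦ by positivity) fun ⟨n, k⟩ ↦ ?_
  rcases Nat.eq_zero_or_pos k with rfl | hk
  · simp
  have hsplit : (k : 𝕜) * (x * q ^ (n + 1)) ^ k = q ^ (n * k) * (k * (x * q) ^ k) := by ring
  rw [hsplit, norm_mul, norm_pow]
  gcongr ?_ * _
  exact pow_le_pow_of_le_one (norm_nonneg q) hq.le (Nat.le_mul_of_pos_right n hk)

/-- Expand `poleTerm x = ∑ k xᵏ` and sum the double series over the exponents of `q` first. -/
lemma hasSum_poleSum (hq : ‖q‖ < 1) {x : 𝕜} (hx : ‖x * q‖ < 1) :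
    HasSum (fun k : ℕ ↦ k * x ^ k * (q ^ k / (1 - q ^ k))) (poleSum x q) := by
  have hrow (n : ℕ) : ∑' k : ℕ, (k : 𝕜) * (x * q ^ (n + 1)) ^ k = poleTerm (x * q ^ (n + 1)) := by
    refine tsum_coe_mul_geometric_of_norm_lt_one ?_
    rw [pow_succ', ← mul_assoc, norm_mul, norm_pow]
    exact (mul_le_of_le_one_right (norm_nonneg _)
      (pow_le_one₀ (norm_nonneg q) hq.le)).trans_lt hx
  have hcol (k : ℕ) : ∑' n : ℕ, (k : 𝕜) * (x * q ^ (n + 1)) ^ k =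
      k * x ^ k * (q ^ k / (1 - q ^ k)) := by
    rcases eq_or_ne k 0 with rfl | hk
    · simp
    have hqk : ‖q ^ k‖ < 1 := by
      rw [norm_pow]
      exact pow_lt_one₀ (norm_nonneg q) hq hk
    rw [div_eq_mul_inv, ← tsum_geometric_of_norm_lt_one hqk, ← mul_assoc, ← tsum_mul_left]
    exact tsum_congr fun n ↦ by ring
  have hsum : Summable (Function.uncurry fun k n : ℕ ↦ (k : 𝕜) * (x * q ^ (n + 1)) ^ k) :=
    (summable_natCast_mul_mul_pow_pow hq hx).prod_symm
  have hcomm : poleSum x q = ∑' k : ℕ, k * x ^ k * (q ^ k / (1 - q ^ k)) := by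
    simp only [poleSum, ← hrow, ← hcol]
    exact hsum.tsum_comm
  rw [hcomm]
  exact (hsum.prod.congr fun k ↦ hcol k).hasSum

lemma differentiableOn_poleSum {q : ℂ} (hq : ‖q‖ < 1) :
    DifferentiableOn ℂ (fun x ↦ poleSum x q) {x | ‖x * q‖ < 1} := by
  have hopen (r : ℝ) : IsOpen {x : ℂ | ‖x * q‖ < r} := isOpen_lt (by fun_prop) continuous_const
  intro x hx
  obtain ⟨r, hxr, hr⟩ := exists_between (show ‖x * q‖ < 1 from hx)
  have hbound (n : ℕ) (y : ℂ) (hy : ‖y * q‖ < r) :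
      ‖y * q ^ (n + 1)‖ ≤ r * ‖q‖ ^ n := by
    rw [pow_succ', ← mul_assoc, norm_mul, norm_pow]
    gcongr
  have hbound' (n : ℕ) (y : ℂ) (hy : ‖y * q‖ < r) : ‖y * q ^ (n + 1)‖ ≤ r :=
    (hbound n y hy).trans (mul_le_of_le_one_right ((norm_nonneg _).trans hy.le)
      (pow_le_one₀ (norm_nonneg q) hq.le))
  have hdiff : DifferentiableOn ℂ (fun x ↦ poleSum x q) {x | ‖x * q‖ < r} := by
    refine Complex.differentiableOn_tsum_of_summable_norm
      (u := fun n ↦ r * ‖q‖ ^ n / (1 - r) ^ 2)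
      (((summable_geometric_of_lt_one (norm_nonneg q) hq).mul_left r).div_const _)
      (fun n y hy ↦ ?_) (hopen r) fun n y hy ↦ ?_
    · have hne : 1 - y * q ^ (n + 1) ≠ 0 := sub_ne_zero.2 <| ne_of_apply_ne norm <| by
        simpa only [norm_one] using ((hbound' n y hy).trans_lt hr).ne'
      unfold poleTerm
      fun_prop (disch := exact pow_ne_zero 2 hne)
    · refine (norm_poleTerm_le (hbound' n y hy) hr).trans ?_
      gcongr
      exact hbound n y hy
  exact (hdiff.differentiableAt ((hopen r).mem_nhds hxr)).differentiableWithinAt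

end Weierstrass

section Annulus

/-- The annulus `‖q‖ < ‖x‖ < ‖q‖⁻¹`, with the second inequality written so that for `q = 0` it
is the punctured plane. -/
def qAnnulus (q : ℂ) : Set ℂ := {x | ‖q‖ < ‖x‖ ∧ ‖q‖ * ‖x‖ < 1}

variable {q x : ℂ}

lemma isOpen_qAnnulus (q : ℂ) : IsOpen (qAnnulus q) :=
  (isOpen_lt continuous_const continuous_norm).inter
    (isOpen_lt (continuous_norm.const_mul _) continuous_const)

lemma ne_zero_of_mem_qAnnulus (hx : x ∈ qAnnulus q) : x ≠ 0 :=
  norm_pos_iff.1 ((norm_nonneg q).trans_lt hx.1)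

lemma inv_mem_qAnnulus (hx : x ∈ qAnnulus q) : x⁻¹ ∈ qAnnulus q := by
  have hpos := norm_pos_iff.2 (ne_zero_of_mem_qAnnulus hx)
  refine ⟨?_, ?_⟩
  · rw [norm_inv, ← one_div, lt_div_iff₀ hpos]
    exact hx.2
  · rw [norm_inv, ← div_eq_mul_inv, div_lt_one hpos]
    exact hx.1

lemma mem_qAnnulus_of_norm_eq_one (hq : ‖q‖ < 1) (hx : ‖x‖ = 1) : x ∈ qAnnulus q := by
  simp [qAnnulus, hx, hq]

lemma isPreconnected_norm_preimage {S : Set ℝ} (hS : IsPreconnected S) (hS0 : S ⊆ Ici 0) :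
    IsPreconnected (norm ⁻¹' S : Set ℂ) := by
  have himage : (norm ⁻¹' S : Set ℂ) =
      (fun p : ℝ × ℝ ↦ (p.1 : ℂ) * Complex.exp (p.2 * Complex.I)) '' (S ×ˢ univ) := by
    ext z
    constructor
    · exact fun hz ↦ ⟨(‖z‖, z.arg), ⟨hz, mem_univ _⟩, Complex.norm_mul_exp_arg_mul_I z⟩
    · rintro ⟨⟨r, t⟩, ⟨hr, -⟩, rfl⟩
      have hr0 : 0 ≤ r := hS0 hr
      simpa [Complex.norm_exp_ofReal_mul_I, abs_of_nonneg hr0] using hr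
  rw [himage]
  exact (hS.prod isPreconnected_univ).image _ (by fun_prop)

lemma isPreconnected_qAnnulus (q : ℂ) : IsPreconnected (qAnnulus q) := by
  have hord : OrdConnected {r : ℝ | ‖q‖ < r ∧ ‖q‖ * r < 1} :=
    ⟨fun x hx y hy z hz ↦ ⟨hx.1.trans_le hz.1,
      (mul_le_mul_of_nonneg_left hz.2 (norm_nonneg q)).trans_lt hy.2⟩⟩
  exact isPreconnected_norm_preimage hord.isPreconnected fun r hr ↦ (norm_nonneg q).trans hr.1.le

lemma exists_eq_on_fundamentalAnnulus {F : ℂ → ℂ} (hq0 : q ≠ 0) {s : ℝ} (hqs : ‖q‖ < s)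
    (hs : s < 1) (hper : ∀ x ∈ qAnnulus q, q * x ∈ qAnnulus q → F (q * x) = F x)
    (hx : x ∈ qAnnulus q) : ∃ y, s ≤ ‖y‖ ∧ ‖q‖ * ‖y‖ ≤ s ∧ F y = F x := by
  have hqpos : 0 < ‖q‖ := norm_pos_iff.2 hq0
  rcases lt_or_ge ‖x‖ s with hlow | hlow
  · have hcancel : q * (q⁻¹ * x) = x := mul_inv_cancel_left₀ hq0 x
    have hnorm : ‖q‖ * ‖q⁻¹ * x‖ = ‖x‖ := by rw [← norm_mul, hcancel]
    have hlt : 1 < ‖q⁻¹ * x‖ := by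
      rw [norm_mul, norm_inv, inv_mul_eq_div, one_lt_div hqpos]
      exact hx.1
    have hmem : q⁻¹ * x ∈ qAnnulus q := ⟨(hqs.trans hs).trans hlt, by linarith⟩
    have hF := hper _ hmem (by rwa [hcancel])
    rw [hcancel] at hF
    exact ⟨q⁻¹ * x, hs.le.trans hlt.le, hnorm.trans_le hlow.le, hF.symm⟩
  rcases le_or_gt (‖q‖ * ‖x‖) s with hhigh | hhigh
  · exact ⟨x, hlow, hhigh, rfl⟩
  · rw [← norm_mul] at hhigh
    have hle : ‖q‖ * ‖q * x‖ ≤ ‖q‖ :=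
      mul_le_of_le_one_right hqpos.le ((norm_mul q x).trans_le hx.2.le)
    exact ⟨q * x, hhigh.le, hle.trans hqs.le, hper x hx ⟨hqs.trans hhigh, by linarith⟩⟩

/-- The maximum of `‖F‖` over a fundamental annulus is attained and is, by periodicity, the maximum
over the open annulus, so the maximum modulus principle applies. -/
lemma eq_of_differentiableOn_qAnnulus_of_periodic (hq : ‖q‖ < 1) (hq0 : q ≠ 0) {F : ℂ → ℂ}
    (hF : DifferentiableOn ℂ F (qAnnulus q))
    (hper : ∀ x ∈ qAnnulus q, q * x ∈ qAnnulus q → F (q * x) = F x) {a b : ℂ}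
    (ha : a ∈ qAnnulus q) (hb : b ∈ qAnnulus q) : F a = F b := by
  obtain ⟨s, hqs, hs⟩ := exists_between hq
  let K : Set ℂ := {y | s ≤ ‖y‖ ∧ ‖q‖ * ‖y‖ ≤ s}
  have hK_sub : K ⊆ qAnnulus q := fun y hy ↦ ⟨hqs.trans_le hy.1, hy.2.trans_lt hs⟩
  have hK_closed : IsClosed K := (isClosed_le continuous_const continuous_norm).inter
    (isClosed_le (continuous_norm.const_mul _) continuous_const)
  have hK_bounded : K ⊆ Metric.closedBall 0 (s / ‖q‖) := fun y hy ↦ by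
    rw [mem_closedBall_zero_iff, le_div_iff₀' (norm_pos_iff.2 hq0)]
    exact hy.2
  have hK_compact : IsCompact K :=
    (isCompact_closedBall _ _).of_isClosed_subset hK_closed hK_bounded
  obtain ⟨c, hcK, hc⟩ := hK_compact.exists_isMaxOn (f := norm ∘ F)
    ⟨1, by simpa using hs.le, by simpa using hqs.le⟩ (hF.continuousOn.mono hK_sub).norm
  have hmax : IsMaxOn (norm ∘ F) (qAnnulus q) c := fun x hx ↦ by
    obtain ⟨y, hsy, hys, hyx⟩ := exists_eq_on_fundamentalAnnulus hq0 hqs hs hper hx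
    simpa [hyx] using hc (show y ∈ K from ⟨hsy, hys⟩)
  have hconst := Complex.eqOn_of_isPreconnected_of_isMaxOn_norm (isPreconnected_qAnnulus q)
    (isOpen_qAnnulus q) hF (hK_sub hcK) hmax
  exact (hconst ha).trans (hconst hb).symm

end Annulus

section DoubleZero

lemma exists_differentiableOn_eq_sub_sq_mul {f : ℂ → ℂ} {U : Set ℂ} {c : ℂ} (hU : U ∈ 𝓝 c)
    (hf : DifferentiableOn ℂ f U) (hfc : f c = 0) (hfc' : deriv f c = 0) :
    ∃ g : ℂ → ℂ, DifferentiableOn ℂ g U ∧ ∀ z, f z = (z - c) ^ 2 * g z := by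
  refine ⟨dslope (dslope f c) c, (Complex.differentiableOn_dslope hU).2
    ((Complex.differentiableOn_dslope hU).2 hf), fun z ↦ ?_⟩
  have hfirst : (z - c) * dslope f c z = f z := by simpa [hfc] using sub_smul_dslope f c z
  have hsecond : (z - c) * dslope (dslope f c) c z = dslope f c z := by
    simpa [hfc'] using sub_smul_dslope (dslope f c) c z
  rw [sq, mul_assoc, hsecond, hfirst]

lemma deriv_one_eq_zero_of_comp_inv_eventuallyEq {f : ℂ → ℂ} (hf : DifferentiableAt ℂ f 1)
    (hinv : (fun x ↦ f x⁻¹) =ᶠ[𝓝 1] f) : deriv f 1 = 0 := by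
  have hcomp : HasDerivAt (fun x ↦ f x⁻¹) (deriv f 1 * -1) 1 := by
    refine HasDerivAt.comp (h₂ := f) 1 (by simpa using hf.hasDerivAt) ?_
    simpa using hasDerivAt_inv (one_ne_zero (α := ℂ))
  have hneg := (hcomp.congr_of_eventuallyEq hinv.symm).unique hf.hasDerivAt
  linear_combination (-1 / 2 : ℂ) * hneg

end DoubleZero

section ThetaRatio

variable {𝕜 : Type*} [NormedField 𝕜]

/-- The theta quotient that represents the difference of the values of `qWeierstrass` at `a`
and `b`. -/
noncomputable def qThetaRatio (a b q : 𝕜) : 𝕜 :=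
  -b * qPochhammer q q ^ 4 * (qTheta (a * b) q * qTheta (a / b) q) /
    (qTheta a q ^ 2 * qTheta b q ^ 2)

/-- The quotient `qThetaRatio a b q / poleTerm a`, with the removable singularity at `a = 1`
filled in. -/
noncomputable def qThetaRatioReg (a b q : 𝕜) : 𝕜 :=
  -b * qPochhammer q q ^ 4 * (qTheta (a * b) q * qTheta (a / b) q) /
    (a * qThetaCofactor a q ^ 2 * qTheta b q ^ 2)

variable [CompleteSpace 𝕜] {a b q : 𝕜}

lemma qThetaRatio_self (hq : ‖q‖ < 1) (hb : b ≠ 0) : qThetaRatio b b q = 0 := by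
  rw [qThetaRatio, div_self hb, qTheta_one hq]
  simp

lemma poleTerm_mul_qThetaRatioReg (hq : ‖q‖ < 1) (ha : a ≠ 0) (b : 𝕜) :
    poleTerm a * qThetaRatioReg a b q = qThetaRatio a b q := by
  have hden : (1 - a) ^ 2 * (a * qThetaCofactor a q ^ 2 * qTheta b q ^ 2) =
      a * (qTheta a q ^ 2 * qTheta b q ^ 2) := by
    rw [qTheta_eq_one_sub_mul hq a]
    ring
  rw [poleTerm, qThetaRatioReg, div_mul_div_comm, hden, mul_div_mul_left _ _ ha, qThetaRatio]

lemma qTheta_mul_mul_qTheta_div_mul_left (hq : ‖q‖ < 1) (hq0 : q ≠ 0) (ha : a ≠ 0) (hb : b ≠ 0) :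
    qTheta (q * a * b) q * qTheta (q * a / b) q =
      (a ^ 2)⁻¹ * (qTheta (a * b) q * qTheta (a / b) q) := by
  rw [mul_assoc, mul_div_assoc, qTheta_mul_left hq hq0 (mul_ne_zero ha hb),
    qTheta_mul_left hq hq0 (div_ne_zero ha hb)]
  field_simp

lemma qTheta_mul_mul_qTheta_div_inv (hq : ‖q‖ < 1) (ha : a ≠ 0) (hb : b ≠ 0) :
    qTheta (a⁻¹ * b) q * qTheta (a⁻¹ / b) q =
      (a ^ 2)⁻¹ * (qTheta (a * b) q * qTheta (a / b) q) := by
  have hmul : a⁻¹ * b = (a / b)⁻¹ := by rw [inv_div, div_eq_inv_mul]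
  have hdiv : a⁻¹ / b = (a * b)⁻¹ := by rw [mul_inv, div_eq_mul_inv]
  rw [hmul, hdiv, qTheta_inv hq (mul_ne_zero ha hb), qTheta_inv hq (div_ne_zero ha hb)]
  field_simp

lemma qThetaRatio_mul_left (hq : ‖q‖ < 1) (hq0 : q ≠ 0) (ha : a ≠ 0) (hb : b ≠ 0) :
    qThetaRatio (q * a) b q = qThetaRatio a b q := by
  have hsq : qTheta (q * a) q ^ 2 = (a ^ 2)⁻¹ * qTheta a q ^ 2 := by
    rw [qTheta_mul_left hq hq0 ha, mul_pow, neg_sq, inv_pow]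
  rw [qThetaRatio, qTheta_mul_mul_qTheta_div_mul_left hq hq0 ha hb, hsq, mul_assoc (a ^ 2)⁻¹,
    mul_left_comm, mul_div_mul_left _ _ (inv_ne_zero (pow_ne_zero 2 ha)), qThetaRatio]

lemma qThetaRatioReg_inv (hq : ‖q‖ < 1) (ha : a ≠ 0) (hb : b ≠ 0) :
    qThetaRatioReg a⁻¹ b q = qThetaRatioReg a b q := by
  have hden : a⁻¹ * qThetaCofactor a q ^ 2 * qTheta b q ^ 2 =
      (a ^ 2)⁻¹ * (a * qThetaCofactor a q ^ 2 * qTheta b q ^ 2) := by field_simp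
  rw [qThetaRatioReg, qTheta_mul_mul_qTheta_div_inv hq ha hb, qThetaCofactor_inv, hden,
    mul_left_comm, mul_div_mul_left _ _ (inv_ne_zero (pow_ne_zero 2 ha)), qThetaRatioReg]

lemma qThetaRatioReg_one (hq : ‖q‖ < 1) (hb : b ≠ 0) (hθ : qTheta b q ≠ 0) :
    qThetaRatioReg 1 b q = 1 := by
  have hP := qPochhammer_ne_zero hq hq
  rw [qThetaRatioReg, qThetaCofactor_one, one_mul, one_div, qTheta_inv hq hb]
  field_simp

end ThetaRatio

section WeierstrassDifference

variable {a b q x : ℂ}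

lemma qThetaCofactor_ne_zero (hq : ‖q‖ < 1) (hx : x ∈ qAnnulus q) : qThetaCofactor x q ≠ 0 := by
  refine mul_ne_zero (qPochhammer_ne_zero hq ?_) (qPochhammer_ne_zero hq ?_)
  · rw [norm_mul]
    exact hx.2
  · rw [norm_div, div_lt_one (norm_pos_iff.2 (ne_zero_of_mem_qAnnulus hx))]
    exact hx.1

lemma qTheta_ne_zero (hq : ‖q‖ < 1) (hx : x ∈ qAnnulus q) (hx1 : x ≠ 1) : qTheta x q ≠ 0 := by
  rw [qTheta_eq_one_sub_mul hq]
  exact mul_ne_zero (sub_ne_zero.2 hx1.symm) (qThetaCofactor_ne_zero hq hx)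

lemma differentiableAt_qTheta (hq : ‖q‖ < 1) (hx : x ≠ 0) :
    DifferentiableAt ℂ (fun x ↦ qTheta x q) x := by
  have hP := differentiable_qPochhammer hq
  exact (hP x).mul ((hP (q / x)).comp x (by fun_prop (disch := assumption)))

lemma differentiableAt_qThetaCofactor (hq : ‖q‖ < 1) (hx : x ≠ 0) :
    DifferentiableAt ℂ (fun x ↦ qThetaCofactor x q) x := by
  have hP := differentiable_qPochhammer hq
  exact ((hP (q * x)).comp x (by fun_prop)).mul
    ((hP (q / x)).comp x (by fun_prop (disch := assumption)))

lemma differentiableOn_qThetaRatioReg (hq : ‖q‖ < 1) (hb : b ≠ 0) (hθ : qTheta b q ≠ 0) :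
    DifferentiableOn ℂ (fun a ↦ qThetaRatioReg a b q) (qAnnulus q) := fun a ha ↦ by
  have ha0 := ne_zero_of_mem_qAnnulus ha
  have hmul : DifferentiableAt ℂ (fun a ↦ qTheta (a * b) q) a :=
    .comp (f := (· * b)) a (differentiableAt_qTheta hq (mul_ne_zero ha0 hb)) (by fun_prop)
  have hdiv : DifferentiableAt ℂ (fun a ↦ qTheta (a / b) q) a :=
    .comp (f := (· / b)) a (differentiableAt_qTheta hq (div_ne_zero ha0 hb)) (by fun_prop)
  have hden : a * qThetaCofactor a q ^ 2 * qTheta b q ^ 2 ≠ 0 :=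
    mul_ne_zero (mul_ne_zero ha0 (pow_ne_zero 2 (qThetaCofactor_ne_zero hq ha)))
      (pow_ne_zero 2 hθ)
  exact (((hmul.mul hdiv).const_mul _).div ((differentiableAt_id.mul
    ((differentiableAt_qThetaCofactor hq ha0).pow 2)).mul_const _) hden).differentiableWithinAt

/-- Both terms have the same double pole at `a = 1`, and invariance under `a ↦ a⁻¹` excludes a
simple pole in the difference. -/
lemma exists_differentiableOn_eq_poleTerm_sub_qThetaRatio (hq : ‖q‖ < 1) (hb : b ≠ 0)
    (hθ : qTheta b q ≠ 0) : ∃ g : ℂ → ℂ, DifferentiableOn ℂ g (qAnnulus q) ∧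
      ∀ a ∈ qAnnulus q, a ≠ 1 → g a = poleTerm a - qThetaRatio a b q := by
  have hnhds : qAnnulus q ∈ 𝓝 1 :=
    (isOpen_qAnnulus q).mem_nhds (mem_qAnnulus_of_norm_eq_one hq norm_one)
  have hdiff : DifferentiableOn ℂ (fun a ↦ 1 - qThetaRatioReg a b q) (qAnnulus q) :=
    (differentiableOn_qThetaRatioReg hq hb hθ).const_sub 1
  have hinv : (fun a ↦ 1 - qThetaRatioReg a⁻¹ b q) =ᶠ[𝓝 1] fun a ↦ 1 - qThetaRatioReg a b q :=
    (eventually_ne_nhds one_ne_zero).mono fun a ha ↦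
      congrArg (1 - ·) (qThetaRatioReg_inv hq ha hb)
  obtain ⟨g, hg, hfactor⟩ := exists_differentiableOn_eq_sub_sq_mul hnhds hdiff
    (by rw [qThetaRatioReg_one hq hb hθ, sub_self])
    (deriv_one_eq_zero_of_comp_inv_eventuallyEq (hdiff.differentiableAt hnhds) hinv)
  refine ⟨fun a ↦ a * g a, differentiableOn_id.mul hg, fun a ha ha1 ↦ ?_⟩
  have hsub : 1 - a ≠ 0 := sub_ne_zero.2 ha1.symm
  calc a * g a = poleTerm a * ((a - 1) ^ 2 * g a) := by rw [poleTerm]; field_simp; ring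
    _ = poleTerm a * (1 - qThetaRatioReg a b q) := by rw [← hfactor]
    _ = poleTerm a - qThetaRatio a b q := by
      rw [mul_sub, mul_one, poleTerm_mul_qThetaRatioReg hq (ne_zero_of_mem_qAnnulus ha)]

lemma differentiableOn_poleSum_add_poleSum_inv (hq : ‖q‖ < 1) :
    DifferentiableOn ℂ (fun x ↦ poleSum x q + poleSum x⁻¹ q) (qAnnulus q) := by
  have hsum : DifferentiableOn ℂ (fun x ↦ poleSum x q) (qAnnulus q) :=
    (differentiableOn_poleSum hq).mono fun x hx ↦
      show ‖x * q‖ < 1 by simpa only [norm_mul, mul_comm] using hx.2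
  exact hsum.add (hsum.comp (fun x hx ↦
    (differentiableAt_inv (ne_zero_of_mem_qAnnulus hx)).differentiableWithinAt)
    fun x hx ↦ inv_mem_qAnnulus hx)

theorem qWeierstrass_sub_qWeierstrass (hq : ‖q‖ < 1) (hq0 : q ≠ 0) (ha : a ∈ qAnnulus q)
    (ha1 : a ≠ 1) (hb : b ∈ qAnnulus q) (hb1 : b ≠ 1) :
    qWeierstrass a q - qWeierstrass b q = qThetaRatio a b q := by
  have hb0 := ne_zero_of_mem_qAnnulus hb
  obtain ⟨g, hg, hgsub⟩ := exists_differentiableOn_eq_poleTerm_sub_qThetaRatio hq hb0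
    (qTheta_ne_zero hq hb hb1)
  let F : ℂ → ℂ := fun x ↦ poleSum x q + poleSum x⁻¹ q + g x
  have hF (x : ℂ) (hx : x ∈ qAnnulus q) (hx1 : x ≠ 1) :
      F x = qWeierstrass x q - qThetaRatio x b q := by
    rw [qWeierstrass_eq_poleTerm_add hq]
    linear_combination hgsub x hx hx1
  have hper (x : ℂ) (hx : x ∈ qAnnulus q) (hqx : q * x ∈ qAnnulus q) : F (q * x) = F x := by
    have hx1 : x ≠ 1 := by
      rintro rfl
      simpa using hqx.1
    have hqx1 : q * x ≠ 1 := ne_of_apply_ne norm <| by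
      simpa only [norm_mul, norm_one] using hx.2.ne
    rw [hF _ hqx hqx1, hF x hx hx1, qWeierstrass_mul_left hq0,
      qThetaRatio_mul_left hq hq0 (ne_zero_of_mem_qAnnulus hx) hb0]
  have hconst : F a = F b := eq_of_differentiableOn_qAnnulus_of_periodic hq hq0
    ((differentiableOn_poleSum_add_poleSum_inv hq).add hg) hper ha hb
  rw [hF a ha ha1, hF b hb hb1, qThetaRatio_self hq hb0] at hconst
  linear_combination hconst

end WeierstrassDifference

section LambertSeries

variable {𝕜 : Type*} [NormedField 𝕜] [CompleteSpace 𝕜] {q : 𝕜}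

/-- As `χ` is primitive, `∑ χ(a) e(a)ⁿ` is `χ⁻¹(n)` times the Gauss sum for every `n`, including
those not coprime to `N`. -/
lemma sum_dirichletCharacter_mul_poleSum (hq : ‖q‖ < 1) {N : ℕ} [NeZero N]
    {χ : DirichletCharacter 𝕜 N} (hχ : χ.IsPrimitive) (e : AddChar (ZMod N) 𝕜) :
    ∑ a, χ a * poleSum (e a) q =
      gaussSum χ e * ∑' n : ℕ, χ⁻¹ n * n * (q ^ n / (1 - q ^ n)) := by
  have hgauss (n : ℕ) : ∑ a, χ a * e a ^ n = χ⁻¹ n * gaussSum χ e := by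
    rw [← gaussSum_mulShift_of_isPrimitive e hχ, gaussSum]
    simp only [AddChar.mulShift_apply, ← AddChar.map_nsmul_eq_pow, nsmul_eq_mul]
  have hnorm (a : ZMod N) : ‖e a * q‖ < 1 := by rwa [norm_mul, AddChar.norm_apply, one_mul]
  have hsum := hasSum_sum fun a (_ : a ∈ Finset.univ) ↦ (hasSum_poleSum hq (hnorm a)).mul_left (χ a)
  rw [← hsum.tsum_eq, ← tsum_mul_left]
  refine tsum_congr fun n ↦ ?_
  calc ∑ a, χ a * (n * e a ^ n * (q ^ n / (1 - q ^ n)))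
      = (∑ a, χ a * e a ^ n) * (n * (q ^ n / (1 - q ^ n))) := by
        rw [Finset.sum_mul]
        exact Finset.sum_congr rfl fun a _ ↦ by ring
    _ = gaussSum χ e * (χ⁻¹ n * n * (q ^ n / (1 - q ^ n))) := by rw [hgauss]; ring

end LambertSeries

section LegendreCharacter

lemma dirichletCharacter_isPrimitive_of_ne_one {R : Type*} [CommMonoidWithZero R] {p : ℕ}
    (hp : p.Prime) {χ : DirichletCharacter R p} (hχ : χ ≠ 1) : χ.IsPrimitive :=
  have : NeZero p := ⟨hp.ne_zero⟩
  (hp.eq_one_or_self_of_dvd _ χ.conductor_dvd_level).resolve_left fun h ↦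
    hχ (DirichletCharacter.eq_one_iff_conductor_eq_one.2 h)

variable (p : ℕ) [Fact p.Prime] (R : Type*) [CommRing R]

/-- The Legendre symbol modulo `p` as a Dirichlet character with values in `R`. -/
noncomputable def legendreChar : DirichletCharacter R p :=
  (quadraticChar (ZMod p)).ringHomComp (Int.castRingHom R)

lemma legendreChar_natCast (n : ℕ) : legendreChar p R n = (legendreSym p n : R) := by
  simp [legendreChar, legendreSym]

lemma inv_legendreChar : (legendreChar p R)⁻¹ = legendreChar p R :=
  ((quadraticChar_isQuadratic (ZMod p)).comp _).inv

lemma tsum_legendreSym_mul_lambert {𝕜 : Type*} [NormedField 𝕜] (q : 𝕜) :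
    ∑' n : ℕ, (legendreSym p n : 𝕜) * n * (q ^ n / (1 - q ^ n)) =
      ∑' n : ℕ, (legendreSym p ((n : ℤ) + 1) : 𝕜) * ((n : 𝕜) + 1) * q ^ (n + 1) /
        (1 - q ^ (n + 1)) := by
  have hsupport : Function.support (fun n : ℕ ↦ (legendreSym p n : 𝕜) * n *
      (q ^ n / (1 - q ^ n))) ⊆ range Nat.succ := fun n hn ↦
    ⟨n.pred, Nat.succ_pred fun h ↦ hn (by simp [h])⟩
  rw [← Nat.succ_injective.tsum_eq hsupport]
  refine tsum_congr fun n ↦ ?_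
  push_cast
  rw [mul_div_assoc]

lemma isPrimitive_legendreChar [CharZero R] (hp : p ≠ 2) : (legendreChar p R).IsPrimitive :=
  dirichletCharacter_isPrimitive_of_ne_one Fact.out <|
    (MulChar.ringHomComp_ne_one_iff Int.cast_injective).2 <|
      quadraticChar_ne_one <| by rwa [ZMod.ringChar_zmod_n]

variable {R}

lemma sum_legendreChar_five_mul (f : ZMod 5 → R) :
    ∑ a, legendreChar 5 R a * f a = f 1 - f 2 - f 3 + f 4 := by
  have h0 : quadraticChar (ZMod 5) 0 = 0 := by decide
  have h1 : quadraticChar (ZMod 5) 1 = 1 := by decide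
  have h2 : quadraticChar (ZMod 5) 2 = -1 := by decide
  have h3 : quadraticChar (ZMod 5) 3 = -1 := by decide
  have h4 : quadraticChar (ZMod 5) 4 = 1 := by decide
  have hsum (g : ZMod 5 → R) : ∑ a, g a = g 0 + g 1 + g 2 + g 3 + g 4 := Fin.sum_univ_five g
  simp only [hsum, legendreChar, MulChar.ringHomComp_apply, h0, h1, h2, h3, h4, map_zero, map_one,
    map_neg]
  ring

lemma gaussSum_legendreChar_five {ζ : R} (hζ : ζ ^ 5 = 1) :
    gaussSum (legendreChar 5 R) (AddChar.zmodChar 5 hζ) = ζ - ζ ^ 2 - ζ ^ 3 + ζ ^ 4 := by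
  rw [gaussSum, sum_legendreChar_five_mul]
  simp only [AddChar.zmodChar_apply]
  change ζ ^ 1 - ζ ^ 2 - ζ ^ 3 + ζ ^ 4 = _
  rw [pow_one]

end LegendreCharacter

section FifthRootsOfUnity

variable {K : Type*} [Field K]

lemma poleTerm_sub_poleTerm_sq {ζ : K} (hζ : IsPrimitiveRoot ζ 5) :
    poleTerm ζ - poleTerm (ζ ^ 2) = -ζ⁻¹ / ((1 - ζ) * (1 - ζ ^ 2)) := by
  have hζ0 : ζ ≠ 0 := hζ.ne_zero (by norm_num)
  have h1 : 1 - ζ ≠ 0 := sub_ne_zero.2 (hζ.ne_one (by norm_num)).symm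
  have h2 : 1 - ζ ^ 2 ≠ 0 :=
    sub_ne_zero.2 (hζ.pow_ne_one_of_pos_of_lt (by norm_num) (by norm_num)).symm
  rw [poleTerm, poleTerm]
  field_simp
  linear_combination (ζ - 1) * hζ.pow_eq_one

lemma poleTerm_sub_poleTerm_sq_ne_zero {ζ : K} (hζ : IsPrimitiveRoot ζ 5) :
    poleTerm ζ - poleTerm (ζ ^ 2) ≠ 0 := by
  rw [poleTerm_sub_poleTerm_sq hζ]
  exact div_ne_zero (neg_ne_zero.2 (inv_ne_zero (hζ.ne_zero (by norm_num))))
    (mul_ne_zero (sub_ne_zero.2 (hζ.ne_one (by norm_num)).symm) (sub_ne_zero.2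
      (hζ.pow_ne_one_of_pos_of_lt (by norm_num) (by norm_num)).symm))

lemma gaussSum_legendreChar_five_eq {ζ : K} (hζ : IsPrimitiveRoot ζ 5) :
    gaussSum (legendreChar 5 K) (AddChar.zmodChar 5 hζ.pow_eq_one) =
      -5 * (poleTerm ζ - poleTerm (ζ ^ 2)) := by
  have hζ0 : ζ ≠ 0 := hζ.ne_zero (by norm_num)
  have h1 : 1 - ζ ≠ 0 := sub_ne_zero.2 (hζ.ne_one (by norm_num)).symm
  have h2 : 1 - ζ ^ 2 ≠ 0 :=
    sub_ne_zero.2 (hζ.pow_ne_one_of_pos_of_lt (by norm_num) (by norm_num)).symm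
  have hsum : 1 + ζ + ζ ^ 2 + ζ ^ 3 + ζ ^ 4 = 0 := by
    simpa [Finset.sum_range_succ] using hζ.geom_sum_eq_zero (by norm_num)
  rw [gaussSum_legendreChar_five, poleTerm_sub_poleTerm_sq hζ]
  field_simp
  linear_combination (ζ ^ 4 - 3 * ζ ^ 3 + ζ ^ 2 + 5 * ζ - 5) * hsum

end FifthRootsOfUnity

section Specialization

variable {q ζ : ℂ}

lemma qPochhammer_mul_qThetaCofactor (hq : ‖q‖ < 1) (hζ : IsPrimitiveRoot ζ 5) :
    qPochhammer q q * qThetaCofactor ζ q * qThetaCofactor (ζ ^ 2) q =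
      qPochhammer (q ^ 5) (q ^ 5) := by
  have hζ0 : ζ ≠ 0 := hζ.ne_zero (by norm_num)
  have hdiv1 : q / ζ = ζ ^ 4 * q := by
    field_simp
    rw [hζ.pow_eq_one, mul_one]
  have hdiv2 : q / ζ ^ 2 = ζ ^ 3 * q := by
    field_simp
    rw [hζ.pow_eq_one, mul_one]
  rw [← prod_qPochhammer_pow_mul hq (by norm_num) hζ q, qThetaCofactor, qThetaCofactor, hdiv1,
    hdiv2, mul_comm q ζ, mul_comm q (ζ ^ 2)]
  simp only [Finset.prod_range_succ, Finset.prod_range_zero, pow_zero, pow_one, one_mul]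
  ring

lemma qThetaRatio_fifthRoots (hq : ‖q‖ < 1) (hζ : IsPrimitiveRoot ζ 5) :
    qThetaRatio ζ (ζ ^ 2) q = (poleTerm ζ - poleTerm (ζ ^ 2)) *
      (qPochhammer q q ^ 5 / qPochhammer (q ^ 5) (q ^ 5)) := by
  have hζ0 : ζ ≠ 0 := hζ.ne_zero (by norm_num)
  have hnorm : ‖ζ‖ = 1 := hζ.norm'_eq_one (by norm_num)
  have hmul : ζ * ζ ^ 2 = (ζ ^ 2)⁻¹ := by
    field_simp
    exact hζ.pow_eq_one
  have hdiv : ζ / ζ ^ 2 = ζ⁻¹ := by field_simp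
  have h1 : 1 - ζ ≠ 0 := sub_ne_zero.2 (hζ.ne_one (by norm_num)).symm
  have h2 : 1 - ζ ^ 2 ≠ 0 :=
    sub_ne_zero.2 (hζ.pow_ne_one_of_pos_of_lt (by norm_num) (by norm_num)).symm
  have hP := qPochhammer_ne_zero hq hq
  have hT1 := qThetaCofactor_ne_zero hq (mem_qAnnulus_of_norm_eq_one hq hnorm)
  have hT2 := qThetaCofactor_ne_zero (x := ζ ^ 2) hq
    (mem_qAnnulus_of_norm_eq_one hq (by rw [norm_pow, hnorm, one_pow]))
  rw [qThetaRatio, hmul, hdiv, qTheta_inv hq hζ0, qTheta_inv hq (pow_ne_zero 2 hζ0),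
    qTheta_eq_one_sub_mul hq, qTheta_eq_one_sub_mul hq, poleTerm_sub_poleTerm_sq hζ,
    ← qPochhammer_mul_qThetaCofactor hq hζ]
  field_simp

lemma poleSum_fifthRoots (hq : ‖q‖ < 1) (hζ : IsPrimitiveRoot ζ 5) :
    poleSum ζ q - poleSum (ζ ^ 2) q - poleSum (ζ ^ 3) q + poleSum (ζ ^ 4) q =
      -5 * (poleTerm ζ - poleTerm (ζ ^ 2)) *
        ∑' n : ℕ, (legendreSym 5 ((n : ℤ) + 1) : ℂ) * ((n : ℂ) + 1) * q ^ (n + 1) /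
          (1 - q ^ (n + 1)) := by
  have hlambert := sum_dirichletCharacter_mul_poleSum hq
    (isPrimitive_legendreChar 5 ℂ (by norm_num)) (AddChar.zmodChar 5 hζ.pow_eq_one)
  rw [sum_legendreChar_five_mul, gaussSum_legendreChar_five_eq hζ] at hlambert
  simp only [inv_legendreChar, legendreChar_natCast, tsum_legendreSym_mul_lambert,
    AddChar.zmodChar_apply] at hlambert
  change poleSum (ζ ^ 1) q - poleSum (ζ ^ 2) q - poleSum (ζ ^ 3) q + poleSum (ζ ^ 4) q = _
    at hlambert
  rwa [pow_one] at hlambert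

lemma qWeierstrass_sub_fifthRoots (hq : ‖q‖ < 1) (hζ : IsPrimitiveRoot ζ 5) :
    qWeierstrass ζ q - qWeierstrass (ζ ^ 2) q = (poleTerm ζ - poleTerm (ζ ^ 2)) *
      (1 - 5 * ∑' n : ℕ, (legendreSym 5 ((n : ℤ) + 1) : ℂ) * ((n : ℂ) + 1) * q ^ (n + 1) /
        (1 - q ^ (n + 1))) := by
  have hinv1 : ζ⁻¹ = ζ ^ 4 := inv_eq_of_mul_eq_one_right (by rw [← pow_succ', hζ.pow_eq_one])
  have hinv2 : (ζ ^ 2)⁻¹ = ζ ^ 3 :=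
    inv_eq_of_mul_eq_one_right (by rw [← pow_add, hζ.pow_eq_one])
  rw [qWeierstrass_eq_poleTerm_add hq, qWeierstrass_eq_poleTerm_add hq, hinv1, hinv2]
  linear_combination poleSum_fifthRoots hq hζ

end Specialization

/-- Ramanujan's "Lost Notebook" modulus 5 identity:
`1 - 5 ∑_{n ≥ 1} (n/5) n qⁿ/(1-qⁿ) = (q;q)_∞⁵ / (q⁵;q⁵)_∞` for `|q| < 1`. -/
theorem ramanujan_lost_notebook_mod5 (q : ℂ) (hq : ‖q‖ < 1) :
    1 - 5 * ∑' n : ℕ, (legendreSym 5 ((n : ℤ) + 1) : ℂ) * ((n : ℂ) + 1) * q ^ (n + 1) /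
        (1 - q ^ (n + 1))
      = (∏' n : ℕ, (1 - q ^ (n + 1))) ^ 5 / ∏' n : ℕ, (1 - (q ^ 5) ^ (n + 1)) := by
  rcases eq_or_ne q 0 with rfl | hq0
  · simp
  obtain ⟨ζ, hζ⟩ : ∃ ζ : ℂ, IsPrimitiveRoot ζ 5 := ⟨_, Complex.isPrimitiveRoot_exp 5 (by norm_num)⟩
  have hmem (k : ℕ) : ζ ^ k ∈ qAnnulus q :=
    mem_qAnnulus_of_norm_eq_one hq (by rw [norm_pow, hζ.norm'_eq_one (by norm_num), one_pow])
  have hdiff : qWeierstrass ζ q - qWeierstrass (ζ ^ 2) q = qThetaRatio ζ (ζ ^ 2) q :=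
    qWeierstrass_sub_qWeierstrass hq hq0 (pow_one ζ ▸ hmem 1) (hζ.ne_one (by norm_num)) (hmem 2)
      (hζ.pow_ne_one_of_pos_of_lt (by norm_num) (by norm_num))
  rw [qWeierstrass_sub_fifthRoots hq hζ, qThetaRatio_fifthRoots hq hζ] at hdiff
  rw [tprod_one_sub_pow_succ, tprod_one_sub_pow_succ]
  exact mul_left_cancel₀ (poleTerm_sub_poleTerm_sq_ne_zero hζ) hdiff
end

section
/- The generating function identity ∑_{n≥0} p(5n+4)·q^n = 5·(q^5;q^5)_∞^5/(q;q)_∞^6 holds as formal power series, where p(n) is the number of partitions of n. -/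
open scoped BigOperators

/-!
Write `E = (q;q)_∞` and `P = ∑ p(n) qⁿ = E⁻¹`. By Euler's theorem `E` is the pentagonal number
series, and pentagonal numbers are `0`, `1` or `2` modulo `5`, so `E = a + c + b` according to these
residues, where `c = -q (q²⁵;q²⁵)_∞`. Jacobi's series for `E³` has exponents `j (j + 1) / 2`, which
are never `2` modulo `5`, so that part `3 a (a b + c²)` of `E³` vanishes and `a b = -c²`.

Separating `P E = 1` by residues modulo `5` gives a circulant linear system for the parts of `P`,
whence `P₄ (a⁵ + b⁵ + 11 c⁵) = 5 c⁴` for the part `P₄` with exponents `4` modulo `5`. The factor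
`a⁵ + b⁵ + 11 c⁵` is the product of `E(ζ q)` over the fifth roots of unity `ζ`, and multiplying out
the factors of these infinite products gives `(q⁵;q⁵)_∞⁶ / (q²⁵;q²⁵)_∞`. Replacing `q⁵` by `q` turns
this into the formal identity.

The coefficients of the partial products of `E` are dominated by those of the reciprocals
`1 / ((1 - q)⋯(1 - qⁿ))`, whose coefficients are nonnegative and whose values at `0 ≤ r < 1` are
bounded in `n`. Hence all the series involved converge absolutely for `|q| < 1`, to the expected
values.
-/

section GaussBinom

open Finset

variable {R : Type*} [CommRing R]

/-- The finite `q`-product `(q;q)_n = (1 - q)(1 - q²)⋯(1 - qⁿ)`. -/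
def qProd (q : R) (n : ℕ) : R := ∏ i ∈ range n, (1 - q ^ (i + 1))

theorem qProd_succ (q : R) (n : ℕ) : qProd q (n + 1) = qProd q n * (1 - q ^ (n + 1)) :=
  prod_range_succ _ _

/-- The Gaussian binomial coefficient, defined by its Pascal rule so that it makes sense for every
element `q` of a ring. -/
def gaussBinom (q : R) : ℕ → ℕ → R
  | _, 0 => 1
  | 0, _ + 1 => 0
  | m + 1, k + 1 => gaussBinom q m k + q ^ (k + 1) * gaussBinom q m (k + 1)

@[simp]
theorem gaussBinom_zero_right (q : R) (m : ℕ) : gaussBinom q m 0 = 1 := by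
  cases m <;> simp [gaussBinom]

theorem gaussBinom_succ_succ (q : R) (m k : ℕ) :
    gaussBinom q (m + 1) (k + 1) = gaussBinom q m k + q ^ (k + 1) * gaussBinom q m (k + 1) := by
  simp [gaussBinom]

theorem gaussBinom_eq_zero_of_lt (q : R) {m k : ℕ} (h : m < k) : gaussBinom q m k = 0 := by
  induction m generalizing k with
  | zero =>
    obtain ⟨k, rfl⟩ := Nat.exists_eq_add_of_lt h
    simp [gaussBinom]
  | succ m ih =>
    obtain ⟨k, rfl⟩ := Nat.exists_eq_succ_of_ne_zero (Nat.ne_zero_of_lt h)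
    simp [gaussBinom_succ_succ, ih (k := k) (by lia), ih (k := k + 1) (by lia)]

@[simp]
theorem gaussBinom_self (q : R) (m : ℕ) : gaussBinom q m m = 1 := by
  induction m with
  | zero => simp
  | succ m ih => simp [gaussBinom_succ_succ, ih, gaussBinom_eq_zero_of_lt]

theorem gaussBinom_succ_succ' (q : R) (k l : ℕ) :
    gaussBinom q (k + l + 1) (k + 1) =
      gaussBinom q (k + l) (k + 1) + q ^ l * gaussBinom q (k + l) k := by
  induction k generalizing l with
  | zero =>
    induction l with
    | zero => simp [gaussBinom]
    | succ l ih =>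
      have hl := gaussBinom_succ_succ q l 0
      simp only [zero_add, gaussBinom_zero_right, gaussBinom_succ_succ q (l + 1)] at ih hl ⊢
      linear_combination q * ih - hl
  | succ k ihk =>
    induction l with
    | zero => simp [gaussBinom_eq_zero_of_lt]
    | succ l ihl =>
      have hk := ihk (l + 1)
      rw [show k + (l + 1) = k + 1 + l by ring] at hk
      rw [← add_assoc, gaussBinom_succ_succ]
      linear_combination hk + q ^ (k + 2) * ihl - gaussBinom_succ_succ q (k + 1 + l) (k + 1) -
        q ^ (l + 1) * gaussBinom_succ_succ q (k + 1 + l) k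

theorem gaussBinom_symm (q : R) (k l : ℕ) : gaussBinom q (k + l) k = gaussBinom q (k + l) l := by
  induction k generalizing l with
  | zero => simp
  | succ k ihk =>
    induction l with
    | zero => simp
    | succ l ihl =>
      have hk := ihk (l + 1)
      rw [show k + (l + 1) = k + 1 + l by ring] at hk
      rw [← add_assoc, gaussBinom_succ_succ, hk, ihl, show k + 1 + l = l + (k + 1) by ring,
        gaussBinom_succ_succ']

theorem gaussBinom_mul_qProd (q : R) (k l : ℕ) :
    gaussBinom q (k + l) k * qProd q k * qProd q l = qProd q (k + l) := by
  induction k generalizing l with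
  | zero => simp [qProd]
  | succ k ihk =>
    induction l with
    | zero => simp [qProd]
    | succ l ihl =>
      have hk := ihk (l + 1)
      rw [show k + (l + 1) = k + 1 + l by ring] at hk
      rw [← add_assoc, gaussBinom_succ_succ, qProd_succ q (k + 1 + l)]
      calc
        _ = gaussBinom q (k + 1 + l) k * qProd q k * qProd q (l + 1) * (1 - q ^ (k + 1)) +
            q ^ (k + 1) * (gaussBinom q (k + 1 + l) (k + 1) * qProd q (k + 1) * qProd q l) *
              (1 - q ^ (l + 1)) := by
          rw [qProd_succ q k, qProd_succ q l]
          ring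
        _ = _ := by
          rw [hk, ihl]
          ring

end GaussBinom

section TripleProduct

open Finset Polynomial

variable {R : Type*} [CommRing R]

/-- The `j`-th triangular number `j (j + 1) / 2`, for an arbitrary integer `j`. -/
def triangular (j : ℤ) : ℕ := (j * (j + 1) / 2).toNat

theorem two_mul_natCast_triangular (j : ℤ) : 2 * (triangular j : ℤ) = j * (j + 1) := by
  have h : 0 ≤ j * (j + 1) := by
    obtain hj | hj := le_or_gt 0 j
    · positivity
    · nlinarith
  rw [triangular, Int.toNat_of_nonneg (by lia),
    Int.mul_ediv_cancel' (Int.even_mul_succ_self j).two_dvd]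

theorem triangular_neg_one_sub (j : ℤ) : triangular (-1 - j) = triangular j := by
  rw [triangular, triangular]
  ring_nf

theorem triangular_add_one (j : ℤ) : (triangular (j + 1) : ℤ) = triangular j + (j + 1) := by
  linarith [two_mul_natCast_triangular j, two_mul_natCast_triangular (j + 1)]

/-- The product `(qx;q)_m · (x - 1)(x - q)⋯(x - q ^ (n - 1))` as a polynomial in `x`: the partial
product of the Jacobi triple product, with the factors `1 - qⁱ/x` multiplied by `x`. -/
noncomputable def finiteTripleProduct (q : R) (m n : ℕ) : R[X] :=
  (∏ i ∈ range m, (1 - C (q ^ (i + 1)) * X)) * ∏ i ∈ range n, (X - C (q ^ i))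

theorem coeff_finiteTripleProduct_zero_right (q : R) (m k : ℕ) :
    (finiteTripleProduct q m 0).coeff k = (-1) ^ k * q ^ triangular k * gaussBinom q m k := by
  induction m generalizing k with
  | zero =>
    cases k <;> simp [finiteTripleProduct, coeff_one, gaussBinom, triangular]
  | succ m ih =>
    have hprod : finiteTripleProduct q (m + 1) 0 =
        finiteTripleProduct q m 0 - C (q ^ (m + 1)) * (finiteTripleProduct q m 0 * X) := by
      simp only [finiteTripleProduct, prod_range_succ]
      ring
    cases k with
    | zero => simp [hprod, ih, triangular]
    | succ k =>
      rw [hprod, coeff_sub, coeff_C_mul, coeff_mul_X, ih, ih]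
      obtain hmk | hkm := lt_or_ge m k
      · simp [gaussBinom_eq_zero_of_lt, hmk, hmk.trans]
      obtain ⟨l, rfl⟩ := Nat.exists_eq_add_of_le hkm
      have htri : triangular ((k + 1 : ℕ) : ℤ) = triangular k + (k + 1) := by
        exact_mod_cast triangular_add_one k
      rw [gaussBinom_succ_succ', htri]
      ring

theorem coeff_finiteTripleProduct (q : R) (m n k : ℕ) :
    (finiteTripleProduct q m n).coeff k =
      (-1) ^ (k + n) * q ^ triangular (k - n) * gaussBinom q (m + n) k := by
  induction n generalizing k with
  | zero => simpa using coeff_finiteTripleProduct_zero_right q m k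
  | succ n ih =>
    have hprod : finiteTripleProduct q m (n + 1) =
        finiteTripleProduct q m n * X - finiteTripleProduct q m n * C (q ^ n) := by
      rw [finiteTripleProduct, prod_range_succ, ← mul_assoc, mul_sub, finiteTripleProduct]
    cases k with
    | zero =>
      have htri : triangular (-((n + 1 : ℕ) : ℤ)) = triangular (-(n : ℤ)) + n := by
        have h := triangular_add_one (-(n : ℤ) - 1)
        rw [sub_add_cancel] at h
        push_cast
        rw [neg_add']
        lia
      rw [hprod, coeff_sub, coeff_mul_X_zero, coeff_mul_C, ih]
      simp only [Nat.cast_zero, zero_sub, htri, zero_add, gaussBinom_zero_right]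
      ring
    | succ k =>
      have htri : triangular (((k + 1 : ℕ) : ℤ) - n) + n = triangular (k - n) + (k + 1) := by
        have h := triangular_add_one (k - n : ℤ)
        push_cast
        rw [add_sub_right_comm]
        lia
      have hpow : q ^ triangular (((k + 1 : ℕ) : ℤ) - n) * q ^ n =
          q ^ triangular (k - n) * q ^ (k + 1) := by
        rw [← pow_add, htri, pow_add]
      have hsub : ((k + 1 : ℕ) : ℤ) - ((n + 1 : ℕ) : ℤ) = k - n := by
        push_cast
        ring
      rw [hprod, coeff_sub, coeff_mul_X, coeff_mul_C, ih, ih, ← add_assoc m n 1,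
        gaussBinom_succ_succ, hsub]
      linear_combination (-1) ^ (k + n) * gaussBinom q (m + n) (k + 1) * hpow

theorem natDegree_finiteTripleProduct_le (q : R) (m n : ℕ) :
    (finiteTripleProduct q m n).natDegree ≤ m + n :=
  natDegree_le_iff_coeff_eq_zero.mpr fun k hk ↦ by
    rw [coeff_finiteTripleProduct, gaussBinom_eq_zero_of_lt q hk, mul_zero]

theorem eval_one_derivative_finiteTripleProduct (q : R) (n : ℕ) :
    (derivative (finiteTripleProduct q n (n + 1))).eval 1 = qProd q n ^ 2 := by
  have hprod : finiteTripleProduct q n (n + 1) = (∏ i ∈ range n, (1 - C (q ^ (i + 1)) * X)) *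
      (∏ i ∈ range n, (X - C (q ^ (i + 1)))) * (X - 1) := by
    rw [finiteTripleProduct, prod_range_succ' _ n, pow_zero, C_1, mul_assoc]
  rw [hprod, derivative_mul]
  simp [eval_prod, qProd, sq]

theorem eval_one_derivative_eq_sum {p : R[X]} {n : ℕ} (hp : p.natDegree < n) :
    (derivative p).eval 1 = ∑ k ∈ range n, k * p.coeff k := by
  rw [derivative_eval, sum_over_range' p (by simp) n hp]
  exact sum_congr rfl fun k _ ↦ by rw [one_pow, mul_one, mul_comm]

/-- A finite form of Jacobi's identity for `(q;q)_∞³`: the right-hand side is the derivative of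
`finiteTripleProduct q n (n + 1)` at `1`, with the contributions of the coefficients `n - j` and
`n + 1 + j`, which are opposite, taken together. -/
theorem qProd_sq_eq_sum_gaussBinom (q : R) (n : ℕ) :
    qProd q n ^ 2 = ∑ j ∈ range (n + 1),
      (-1) ^ j * (2 * j + 1) * q ^ triangular j * gaussBinom q (2 * n + 1) (n - j) := by
  have hdeg : (finiteTripleProduct q n (n + 1)).natDegree < (n + 1) + (n + 1) :=
    (natDegree_finiteTripleProduct_le q n (n + 1)).trans_lt (by lia)
  rw [← eval_one_derivative_finiteTripleProduct, eval_one_derivative_eq_sum hdeg, sum_range_add,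
    ← sum_range_reflect _ (n + 1), ← sum_add_distrib]
  refine sum_congr rfl fun j hj ↦ ?_
  obtain ⟨l, rfl⟩ := Nat.exists_eq_add_of_le (mem_range_succ_iff.mp hj)
  have hlow : (finiteTripleProduct q (j + l) (j + l + 1)).coeff l =
      -((-1) ^ j * q ^ triangular j * gaussBinom q (2 * (j + l) + 1) l) := by
    have hsign : (-1 : R) ^ (l + (j + l + 1)) = -(-1) ^ j := by
      rw [show l + (j + l + 1) = 2 * l + j + 1 by ring, pow_succ, pow_add, pow_mul]
      simp
    rw [coeff_finiteTripleProduct, hsign, ← triangular_neg_one_sub j]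
    push_cast
    ring_nf
  have hhigh : (finiteTripleProduct q (j + l) (j + l + 1)).coeff (j + l + 1 + j) =
      (-1) ^ j * q ^ triangular j * gaussBinom q (2 * (j + l) + 1) l := by
    have hsign : (-1 : R) ^ (j + l + 1 + j + (j + l + 1)) = (-1) ^ j := by
      rw [show j + l + 1 + j + (j + l + 1) = 2 * (j + l + 1) + j by ring, pow_add, pow_mul]
      simp
    rw [coeff_finiteTripleProduct, hsign,
      show j + l + (j + l + 1) = l + (j + l + 1 + j) by ring, ← gaussBinom_symm]
    push_cast
    ring_nf
  rw [show j + l + 1 - 1 - j = l by lia, Nat.add_sub_cancel_left, hlow, hhigh]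
  push_cast
  ring

end TripleProduct

section Jacobi

open Finset PowerSeries

variable (R : Type*) [CommRing R]

theorem X_pow_dvd_pentagonalSeries_sub_qProd {m n : ℕ} (h : m ≤ n) :
    X ^ (m + 1) ∣ pentagonalSeries R - qProd X n := by
  rw [X_pow_dvd_iff]
  intro i hi
  have hstable (k : ℕ) : (qProd (X : R⟦X⟧) (n + k)).coeff i = (qProd (X : R⟦X⟧) n).coeff i := by
    induction k with
    | zero => rfl
    | succ k ih =>
      rw [← add_assoc, qProd_succ, mul_sub, mul_one, map_sub, ih, coeff_mul_X_pow',
        if_neg (by lia), sub_zero]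
  obtain ⟨s, hs⟩ := Filter.eventually_atTop.mp (coeff_prod_one_sub_X_pow_eventually_eq R i)
  obtain ⟨N, hN⟩ := s.exists_nat_subset_range
  rw [map_sub, ← hs (range (n + N)) (hN.trans (range_subset_range.mpr (Nat.le_add_left N n))),
    sub_eq_zero]
  exact hstable N

theorem isUnit_pentagonalSeries : IsUnit (pentagonalSeries R) := by
  have hcoeff : (pentagonalSeries R).coeff (pentagonal 0) = 1 := by
    simp [coeff_pentagonalSeries_pentagonal]
  rw [isUnit_iff_constantCoeff, ← coeff_zero_eq_constantCoeff_apply]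
  exact hcoeff ▸ isUnit_one

theorem X_pow_dvd_pentagonalSeries_mul_gaussBinom_sub_one {j k l : ℕ} (hk : j ≤ k) (hl : j ≤ l) :
    X ^ (j + 1) ∣ pentagonalSeries R * gaussBinom X (k + l) k - 1 := by
  have hG := gaussBinom_mul_qProd (X : R⟦X⟧) k l
  set E := pentagonalSeries R
  set G := gaussBinom (X : R⟦X⟧) (k + l) k
  have hmul : (E * G - 1) * E =
      (E - qProd X k) * (E * G) + (E - qProd X l) * (qProd X k * G) - (E - qProd X (k + l)) := by
    linear_combination hG
  rw [← (isUnit_pentagonalSeries R).dvd_mul_right, hmul]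
  have hE {n : ℕ} (hn : j ≤ n) := X_pow_dvd_pentagonalSeries_sub_qProd R hn
  exact (((hE hk).mul_right _).add ((hE hl).mul_right _)).sub (hE (hk.trans (k.le_add_right l)))

theorem le_triangular (j : ℕ) : j ≤ triangular j := by
  have h := two_mul_natCast_triangular j
  nlinarith [sq_nonneg (j : ℤ), j.le_mul_self]

/-- Jacobi's identity for `(q;q)_∞³`, up to `O(q ^ (n + 1))`: multiply the finite form by `(q;q)_∞`
and use that `(q;q)_∞ · gaussBinom` is `1` up to higher powers of `q`. -/
theorem X_pow_dvd_pentagonalSeries_pow_three_sub_sum (n : ℕ) :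
    X ^ (n + 1) ∣ pentagonalSeries R ^ 3 -
      ∑ j ∈ range (n + 1), ((-1) ^ j * (2 * j + 1) : ℤ) • (X : R⟦X⟧) ^ triangular j := by
  set E := pentagonalSeries R
  have hsplit : E ^ 3 - ∑ j ∈ range (n + 1), ((-1) ^ j * (2 * j + 1) : ℤ) • X ^ triangular j =
      (E ^ 2 - qProd X n ^ 2) * E + ∑ j ∈ range (n + 1), ((-1) ^ j * (2 * j + 1) : ℤ) •
        (X ^ triangular j * (E * gaussBinom X (2 * n + 1) (n - j) - 1)) := by
    have hsum : ∑ j ∈ range (n + 1), ((-1) ^ j * (2 * j + 1) : ℤ) •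
        (X ^ triangular j * (E * gaussBinom X (2 * n + 1) (n - j))) = qProd X n ^ 2 * E := by
      rw [qProd_sq_eq_sum_gaussBinom, sum_mul]
      refine sum_congr rfl fun j _ ↦ ?_
      rw [zsmul_eq_mul]
      push_cast
      ring
    simp only [mul_sub, mul_one, smul_sub, sum_sub_distrib, hsum]
    ring
  rw [hsplit]
  refine .add (.mul_right ((X_pow_dvd_pentagonalSeries_sub_qProd R le_rfl).trans
    (sub_dvd_pow_sub_pow _ _ 2)) _) (dvd_sum fun j hj ↦ ?_)
  obtain ⟨l, rfl⟩ := Nat.exists_eq_add_of_le (mem_range_succ_iff.mp hj)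
  have hG := X_pow_dvd_pentagonalSeries_mul_gaussBinom_sub_one R le_rfl
    (show l ≤ l + 2 * j + 1 by lia)
  rw [show l + (l + 2 * j + 1) = 2 * (j + l) + 1 by ring] at hG
  rw [Nat.add_sub_cancel_left, zsmul_eq_mul]
  refine .mul_left ((pow_dvd_pow X (n := triangular j + (l + 1)) ?_).trans ?_) _
  · have := le_triangular j
    lia
  · rw [pow_add]
    exact mul_dvd_mul_left _ hG

theorem natCast_triangular_ne_two (j : ℤ) : (triangular j : ZMod 5) ≠ 2 := by
  have h : 2 * (triangular j : ZMod 5) = j * (j + 1) := by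
    exact_mod_cast congrArg (Int.cast : ℤ → ZMod 5) (two_mul_natCast_triangular j)
  generalize (triangular j : ZMod 5) = t at h
  generalize (j : ZMod 5) = x at h
  revert t x
  decide

theorem coeff_pentagonalSeries_pow_three_eq_zero {n : ℕ} (hn : (n : ZMod 5) = 2) :
    (pentagonalSeries R ^ 3).coeff n = 0 := by
  have h := X_pow_dvd_iff.mp (X_pow_dvd_pentagonalSeries_pow_three_sub_sum R n) n n.lt_succ_self
  rw [map_sub, sub_eq_zero] at h
  rw [h, map_sum]
  refine sum_eq_zero fun j _ ↦ ?_
  rw [map_zsmul, coeff_X_pow, if_neg, smul_zero]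
  rintro rfl
  exact natCast_triangular_ne_two j hn

end Jacobi

section Residue

open Finset PowerSeries

variable {R : Type*} [CommRing R]

/-- The part of a power series made of the terms whose exponent is `r` modulo `m`. -/
noncomputable def residuePart {m : ℕ} (r : ZMod m) : R⟦X⟧ →ₗ[R] R⟦X⟧ where
  toFun F := .mk fun n ↦ if (n : ZMod m) = r then F.coeff n else 0
  map_add' F G := by ext; simp [ite_add_zero]
  map_smul' a F := by ext; simp

/-- The series `∑ F.coeff (m * n + r) Xⁿ`, one of the components of the `m`-dissection of `F`. -/
noncomputable def dissect (m r : ℕ) : R⟦X⟧ →ₗ[R] R⟦X⟧ where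
  toFun F := .mk fun n ↦ F.coeff (m * n + r)
  map_add' F G := by ext; simp
  map_smul' a F := by ext; simp

theorem coeff_residuePart {m : ℕ} (r : ZMod m) (F : R⟦X⟧) (n : ℕ) :
    (residuePart r F).coeff n = if (n : ZMod m) = r then F.coeff n else 0 := by
  simp [residuePart]

theorem coeff_dissect (m r : ℕ) (F : R⟦X⟧) (n : ℕ) :
    (dissect m r F).coeff n = F.coeff (m * n + r) := by
  simp [dissect]

theorem residuePart_natCast {m r : ℕ} (hr : r < m) (F : R⟦X⟧) :
    residuePart (r : ZMod m) F = X ^ r * expand m (Nat.ne_zero_of_lt hr) (dissect m r F) := by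
  ext n
  rw [coeff_residuePart, coeff_X_pow_mul']
  obtain hn | hn := lt_or_ge n r
  · rw [if_neg hn.not_ge, if_neg]
    rw [ZMod.natCast_eq_natCast_iff', Nat.mod_eq_of_lt (hn.trans hr), Nat.mod_eq_of_lt hr]
    exact hn.ne
  · obtain ⟨t, rfl⟩ := Nat.exists_eq_add_of_le hn
    rw [if_pos hn, Nat.add_sub_cancel_left, coeff_expand]
    simp only [Nat.cast_add, add_eq_left, ZMod.natCast_eq_zero_iff]
    split_ifs with ht
    · rw [coeff_dissect, Nat.mul_div_cancel' ht, add_comm]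
    · rfl

theorem sum_residuePart {m : ℕ} [NeZero m] (F : R⟦X⟧) : ∑ r : ZMod m, residuePart r F = F := by
  ext n
  simp [coeff_residuePart]

theorem residuePart_mul_residuePart {m : ℕ} (r s : ZMod m) (F G : R⟦X⟧) :
    residuePart r (F * residuePart s G) = residuePart (r - s) F * residuePart s G := by
  ext n
  have hterm {p : ℕ × ℕ} (hp : p ∈ antidiagonal n) :
      F.coeff p.1 * (residuePart s G).coeff p.2 * (if (n : ZMod m) = r then 1 else 0) =
        (residuePart (r - s) F).coeff p.1 * (residuePart s G).coeff p.2 := by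
    rw [← mem_antidiagonal.mp hp, coeff_residuePart, coeff_residuePart, Nat.cast_add]
    grind
  rw [coeff_residuePart, coeff_mul, coeff_mul, ← mul_boole, sum_mul]
  exact sum_congr rfl fun p ↦ hterm

theorem residuePart_one {m : ℕ} (r : ZMod m) :
    residuePart r (1 : R⟦X⟧) = if r = 0 then 1 else 0 := by
  ext n
  by_cases hn : n = 0
  · subst hn
    split_ifs with hr <;> simp [coeff_residuePart, hr, eq_comm]
  · split_ifs <;> simp [coeff_residuePart, coeff_one, hn]

theorem rescale_residuePart {m : ℕ} {ζ : R} (hζ : ζ ^ m = 1) (k : ℕ) (F : R⟦X⟧) :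
    rescale ζ (residuePart (k : ZMod m) F) = C (ζ ^ k) * residuePart (k : ZMod m) F := by
  ext n
  rw [coeff_rescale, coeff_C_mul, coeff_residuePart]
  split_ifs with hn
  · rw [pow_eq_pow_of_modEq ((ZMod.natCast_eq_natCast_iff _ _ _).mp hn) hζ]
  · rw [mul_zero, mul_zero]

end Residue

section Pentagonal

open Finset PowerSeries

variable (R : Type*) [CommRing R]

theorem residue_pentagonal (k : ℤ) :
    (pentagonal k : ZMod 5) = 0 ∨ (pentagonal k : ZMod 5) = 1 ∨ (pentagonal k : ZMod 5) = 2 := by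
  have h : 2 * (pentagonal k : ZMod 5) = k * (3 * k - 1) := by
    exact_mod_cast congrArg (Int.cast : ℤ → ZMod 5) (two_mul_natCast_pentagonal k)
  generalize (pentagonal k : ZMod 5) = t at h ⊢
  generalize (k : ZMod 5) = x at h
  revert t x
  decide

theorem exists_eq_one_sub_five_mul_of_pentagonal {j : ℤ} (h : (pentagonal j : ZMod 5) = 1) :
    ∃ k : ℤ, j = 1 - 5 * k := by
  have hj : 2 * (pentagonal j : ZMod 5) = j * (3 * j - 1) := by
    exact_mod_cast congrArg (Int.cast : ℤ → ZMod 5) (two_mul_natCast_pentagonal j)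
  have h1 : (j : ZMod 5) = 1 := by
    rw [h] at hj
    generalize (j : ZMod 5) = x at hj ⊢
    revert x
    decide
  obtain ⟨k, hk⟩ := (ZMod.intCast_zmod_eq_zero_iff_dvd (j - 1) 5).mp (by simp [h1])
  exact ⟨-k, by push_cast at hk; linarith⟩

theorem pentagonal_one_sub_five_mul (k : ℤ) : pentagonal (1 - 5 * k) = 25 * pentagonal k + 1 := by
  have h1 := two_mul_natCast_pentagonal k
  have h2 := two_mul_natCast_pentagonal (1 - 5 * k)
  zify
  linarith

theorem residuePart_pentagonalSeries_eq_zero {r : ZMod 5} (h0 : r ≠ 0) (h1 : r ≠ 1) (h2 : r ≠ 2) :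
    residuePart r (pentagonalSeries R) = 0 := by
  ext n
  rw [coeff_residuePart, map_zero, ite_eq_right_iff]
  refine fun hn ↦ coeff_pentagonalSeries_eq_zero R ?_
  rintro ⟨k, rfl⟩
  grind [residue_pentagonal k]

theorem residuePart_one_pentagonalSeries : residuePart (1 : ZMod 5) (pentagonalSeries R) =
    -(X * expand 25 (by norm_num) (pentagonalSeries R)) := by
  ext n
  rw [coeff_residuePart, map_neg]
  by_cases hn : ∃ k : ℤ, pentagonal (1 - 5 * k) = n
  · obtain ⟨k, rfl⟩ := hn
    have hsign : (1 - 5 * k).negOnePow = -k.negOnePow := by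
      rw [show 1 - 5 * k = 1 - k - 2 * (2 * k) by ring, Int.negOnePow_sub, Int.negOnePow_two_mul,
        mul_one, Int.negOnePow_sub, Int.negOnePow_one, neg_one_mul]
    have hres : ((25 * pentagonal k + 1 : ℕ) : ZMod 5) = 1 := by
      rw [Nat.cast_add, (ZMod.natCast_eq_zero_iff _ 5).mpr (by lia), zero_add, Nat.cast_one]
    rw [coeff_pentagonalSeries_pentagonal, hsign, pentagonal_one_sub_five_mul, if_pos hres,
      coeff_succ_X_mul, coeff_expand_mul, coeff_pentagonalSeries_pentagonal]
    simp
  · have hres (h : (n : ZMod 5) = 1) : (pentagonalSeries R).coeff n = 0 := by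
      refine coeff_pentagonalSeries_eq_zero R ?_
      rintro ⟨j, rfl⟩
      obtain ⟨k, rfl⟩ := exists_eq_one_sub_five_mul_of_pentagonal h
      exact hn ⟨k, rfl⟩
    rw [ite_eq_right_iff.mpr hres, eq_comm, neg_eq_zero]
    cases n with
    | zero => exact coeff_zero_X_mul _
    | succ n =>
      rw [coeff_succ_X_mul, coeff_expand, ite_eq_right_iff]
      rintro ⟨t, rfl⟩
      rw [Nat.mul_div_cancel_left _ (by norm_num)]
      refine coeff_pentagonalSeries_eq_zero R ?_
      rintro ⟨k, rfl⟩
      exact hn ⟨k, pentagonal_one_sub_five_mul k⟩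

theorem pentagonalSeries_eq_add_residuePart : pentagonalSeries R =
    residuePart (0 : ZMod 5) (pentagonalSeries R) +
      residuePart (1 : ZMod 5) (pentagonalSeries R) +
      residuePart (2 : ZMod 5) (pentagonalSeries R) := by
  have hzero : ∀ s ∈ (univ : Finset (ZMod 5)), s ∉ ({0, 1, 2} : Finset (ZMod 5)) →
      residuePart s (pentagonalSeries R) = 0 := by
    intro s _ hs
    simp only [mem_insert, mem_singleton, not_or] at hs
    exact residuePart_pentagonalSeries_eq_zero R hs.1 hs.2.1 hs.2.2
  conv_lhs => rw [← sum_residuePart (m := 5) (pentagonalSeries R)]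
  rw [← sum_subset (subset_univ {0, 1, 2}) hzero, sum_insert (by decide),
    sum_insert (by decide), sum_singleton, add_assoc]

theorem residuePart_mul_pentagonalSeries (r : ZMod 5) (F : R⟦X⟧) :
    residuePart r (F * pentagonalSeries R) =
      residuePart r F * residuePart (0 : ZMod 5) (pentagonalSeries R) +
      residuePart (r - 1) F * residuePart (1 : ZMod 5) (pentagonalSeries R) +
      residuePart (r - 2) F * residuePart (2 : ZMod 5) (pentagonalSeries R) := by
  conv_lhs => rw [pentagonalSeries_eq_add_residuePart]
  simp only [mul_add, map_add, residuePart_mul_residuePart, sub_zero]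

theorem residuePart_two_pentagonalSeries_pow_three :
    residuePart (2 : ZMod 5) (pentagonalSeries R ^ 3) = 0 := by
  ext n
  rw [coeff_residuePart, map_zero, ite_eq_right_iff]
  exact coeff_pentagonalSeries_pow_three_eq_zero R

theorem residuePart_zero_mul_residuePart_two [IsDomain R] [CharZero R] :
    residuePart (0 : ZMod 5) (pentagonalSeries R) * residuePart (2 : ZMod 5) (pentagonalSeries R) =
      -residuePart (1 : ZMod 5) (pentagonalSeries R) ^ 2 := by
  have hcube := residuePart_two_pentagonalSeries_pow_three R
  have hsub : (2 - 1 : ZMod 5) = 1 ∧ (1 - 2 : ZMod 5) = 4 ∧ (0 - 1 : ZMod 5) = 4 ∧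
      (0 - 2 : ZMod 5) = 3 := by decide
  have h3 : residuePart (3 : ZMod 5) (pentagonalSeries R) = 0 :=
    residuePart_pentagonalSeries_eq_zero R (by decide) (by decide) (by decide)
  have h4 : residuePart (4 : ZMod 5) (pentagonalSeries R) = 0 :=
    residuePart_pentagonalSeries_eq_zero R (by decide) (by decide) (by decide)
  rw [pow_three'] at hcube
  simp only [residuePart_mul_pentagonalSeries, sub_self, hsub, h3, h4] at hcube
  have ha : residuePart (0 : ZMod 5) (pentagonalSeries R) ≠ 0 := by
    intro h
    have hcoeff := congrArg (coeff (pentagonal 0)) h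
    rw [coeff_residuePart, coeff_pentagonalSeries_pentagonal] at hcoeff
    simp [pentagonal_def] at hcoeff
  set a := residuePart (0 : ZMod 5) (pentagonalSeries R)
  set c := residuePart (1 : ZMod 5) (pentagonalSeries R)
  set b := residuePart (2 : ZMod 5) (pentagonalSeries R)
  have hmul : a * (a * b + c ^ 2) = 0 := by
    have hthree : (3 : R) • (a * (a * b + c ^ 2)) = 0 := by
      rw [ofNat_smul_eq_nsmul]
      linear_combination hcube
    ext n
    simpa using congrArg (coeff n) hthree
  exact eq_neg_of_add_eq_zero_left ((mul_eq_zero.mp hmul).resolve_left ha)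

theorem residuePart_four_mul_of_mul_pentagonalSeries_eq_one [IsDomain R] [CharZero R] {P : R⟦X⟧}
    (hP : P * pentagonalSeries R = 1) :
    residuePart (4 : ZMod 5) P *
      (residuePart (0 : ZMod 5) (pentagonalSeries R) ^ 5 +
        residuePart (2 : ZMod 5) (pentagonalSeries R) ^ 5 +
        11 * residuePart (1 : ZMod 5) (pentagonalSeries R) ^ 5) =
      5 * residuePart (1 : ZMod 5) (pentagonalSeries R) ^ 4 := by
  have hsystem (r : ZMod 5) := residuePart_mul_pentagonalSeries R r P
  simp only [hP] at hsystem
  have h0 := hsystem 0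
  have h1 := hsystem 1
  have h2 := hsystem 2
  have h3 := hsystem 3
  have h4 := hsystem 4
  have hsub : (0 - 1 : ZMod 5) = 4 ∧ (0 - 2 : ZMod 5) = 3 ∧ (1 - 2 : ZMod 5) = 4 ∧
      (2 - 1 : ZMod 5) = 1 ∧ (3 - 1 : ZMod 5) = 2 ∧ (3 - 2 : ZMod 5) = 1 ∧
      (4 - 1 : ZMod 5) = 3 ∧ (4 - 2 : ZMod 5) = 2 := by decide
  have hne : (1 : ZMod 5) ≠ 0 ∧ (2 : ZMod 5) ≠ 0 ∧ (3 : ZMod 5) ≠ 0 ∧ (4 : ZMod 5) ≠ 0 := by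
    decide
  simp only [residuePart_one, hsub, hne, sub_self, if_true, if_false] at h0 h1 h2 h3 h4
  have hab := residuePart_zero_mul_residuePart_two R
  set a := residuePart (0 : ZMod 5) (pentagonalSeries R)
  set c := residuePart (1 : ZMod 5) (pentagonalSeries R)
  set b := residuePart (2 : ZMod 5) (pentagonalSeries R)
  -- The multipliers form, up to sign, a row of the adjugate of the circulant matrix of the system,
  -- reduced by `a * b = -c ^ 2`.
  linear_combination -5 * c ^ 4 * h0 - (b ^ 4 - 3 * a * c ^ 3) * h1 -
    (2 * a ^ 2 * c ^ 2 - b ^ 3 * c) * h2 - (2 * b ^ 2 * c ^ 2 - a ^ 3 * c) * h3 -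
    (a ^ 4 - 3 * b * c ^ 3) * h4 -
    (residuePart (2 : ZMod 5) P * (a ^ 3 - b ^ 2 * c) +
      residuePart (1 : ZMod 5) P * (b ^ 3 - a ^ 2 * c) +
      2 * residuePart (0 : ZMod 5) P * a * c ^ 2 - 6 * residuePart (4 : ZMod 5) P * c ^ 3 +
      2 * residuePart (3 : ZMod 5) P * b * c ^ 2) * hab

end Pentagonal

section RootsOfUnity

open Finset PowerSeries

variable {R : Type*} [CommRing R]

theorem prod_range_one_sub_mul [IsDomain R] {p : ℕ} (hp : 0 < p) {ζ : R}
    (hζ : IsPrimitiveRoot ζ p) (y : R) : ∏ i ∈ range p, (1 - ζ ^ i * y) = 1 - y ^ p := by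
  have h := congrArg (Polynomial.eval 1) (X_pow_sub_C_eq_prod hζ hp (rfl : y ^ p = y ^ p))
  simpa [Polynomial.eval_prod] using h.symm

theorem prod_range_one_sub_mul_pow_of_coprime [IsDomain R] {p n : ℕ} (hp : 0 < p) {ζ : R}
    (hζ : IsPrimitiveRoot ζ p) (hn : n.Coprime p) (y : R) :
    ∏ i ∈ range p, (1 - (ζ ^ i * y) ^ n) = 1 - (y ^ p) ^ n := by
  rw [← pow_mul, mul_comm p n, pow_mul,
    ← prod_range_one_sub_mul hp (hζ.pow_of_coprime n hn) (y ^ n)]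
  refine prod_congr rfl fun i _ ↦ ?_
  rw [mul_pow, pow_right_comm]

theorem prod_range_one_sub_mul_pow_mul {p : ℕ} {ζ : R} (hζ : ζ ^ p = 1) (n : ℕ) (y : R) :
    ∏ i ∈ range p, (1 - (ζ ^ i * y) ^ (p * n)) = (1 - (y ^ p) ^ n) ^ p := by
  have hterm (i : ℕ) : (ζ ^ i * y) ^ (p * n) = (y ^ p) ^ n := by
    rw [pow_mul, mul_pow, pow_right_comm, hζ, one_pow, one_mul]
  simp only [hterm, prod_const, card_range]

theorem prod_qProd_mul_qProd [IsDomain R] {p : ℕ} (hp : p.Prime) {ζ : R}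
    (hζ : IsPrimitiveRoot ζ p) (y : R) (n : ℕ) :
    (∏ i ∈ range p, qProd (ζ ^ i * y) (p * n)) * qProd ((y ^ p) ^ p) n =
      qProd (y ^ p) (p * n) * qProd (y ^ p) n ^ p := by
  induction n with
  | zero => simp [qProd]
  | succ n ih =>
    obtain ⟨d, hd⟩ := Nat.exists_eq_add_one_of_ne_zero hp.ne_zero
    have hsplit (z : R) : qProd z (p * (n + 1)) = qProd z (p * n) *
        ((∏ j ∈ range d, (1 - z ^ (p * n + j + 1))) * (1 - z ^ (p * (n + 1)))) := by
      rw [Nat.mul_succ, qProd, prod_range_add, hd, prod_range_succ]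
      rfl
    have hcoprime : ∏ j ∈ range d, ∏ i ∈ range p, (1 - (ζ ^ i * y) ^ (p * n + j + 1)) =
        ∏ j ∈ range d, (1 - (y ^ p) ^ (p * n + j + 1)) := by
      refine prod_congr rfl fun j hj ↦
        prod_range_one_sub_mul_pow_of_coprime hp.pos hζ (Nat.Coprime.symm ?_) y
      rw [hp.coprime_iff_not_dvd, add_assoc, Nat.dvd_add_right (dvd_mul_right _ _)]
      exact Nat.not_dvd_of_pos_of_lt j.succ_pos (hd ▸ Nat.succ_lt_succ (mem_range.mp hj))
    simp only [hsplit, qProd_succ, prod_mul_distrib, mul_pow _ _ p]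
    rw [prod_comm, hcoprime, prod_range_one_sub_mul_pow_mul hζ.pow_eq_one, pow_mul _ p (n + 1)]
    linear_combination (∏ j ∈ range d, (1 - (y ^ p) ^ (p * n + j + 1))) *
      (1 - (y ^ p) ^ (n + 1)) ^ p * (1 - ((y ^ p) ^ p) ^ (n + 1)) * ih

theorem X_pow_dvd_map_pentagonalSeries_sub_qProd {φ : R⟦X⟧ →+* R⟦X⟧} (hφ : X ∣ φ X) {m n : ℕ}
    (h : m ≤ n) : X ^ (m + 1) ∣ φ (pentagonalSeries R) - qProd (φ X) n := by
  have hmap : φ (qProd X n) = qProd (φ X) n := by simp [qProd]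
  have hdvd := map_dvd φ (X_pow_dvd_pentagonalSeries_sub_qProd R h)
  rw [map_sub, map_pow, hmap] at hdvd
  exact (pow_dvd_pow_of_dvd hφ _).trans hdvd

theorem prod_rescale_pentagonalSeries_mul_expand [IsDomain R] {p : ℕ} (hp : p.Prime) {ζ : R}
    (hζ : IsPrimitiveRoot ζ p) :
    (∏ i ∈ range p, rescale (ζ ^ i) (pentagonalSeries R)) *
        expand (p * p) (mul_ne_zero hp.ne_zero hp.ne_zero) (pentagonalSeries R) =
      expand p hp.ne_zero (pentagonalSeries R) ^ (p + 1) := by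
  rw [← sub_eq_zero]
  ext m
  refine X_pow_dvd_iff.mp ?_ m m.lt_succ_self
  rw [← Ideal.mem_span_singleton, ← Ideal.Quotient.eq]
  set π := Ideal.Quotient.mk (Ideal.span {(X : R⟦X⟧) ^ (m + 1)})
  have hπ (φ : R⟦X⟧ →+* R⟦X⟧) (hφ : X ∣ φ X) {n : ℕ} (h : m ≤ n) :
      π (φ (pentagonalSeries R)) = π (qProd (φ X) n) := by
    rw [Ideal.Quotient.eq, Ideal.mem_span_singleton]
    exact X_pow_dvd_map_pentagonalSeries_sub_qProd hφ h
  have hle : m ≤ p * m := Nat.le_mul_of_pos_left m hp.pos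
  have hrescale (i : ℕ) :
      π (rescale (ζ ^ i) (pentagonalSeries R)) = π (qProd (C ζ ^ i * X) (p * m)) := by
    rw [← map_pow, ← rescale_X]
    exact hπ _ (by simp [rescale_X]) hle
  have hexpand {k n : ℕ} (hk : k ≠ 0) (h : m ≤ n) :
      π (expand k hk (pentagonalSeries R)) = π (qProd (X ^ k) n) := by
    rw [← expand_X k hk]
    exact hπ (expand (R := R) k hk) (by simpa using dvd_pow_self (X : R⟦X⟧) hk) h
  have hfinite := congrArg π
    (prod_qProd_mul_qProd hp (hζ.map_of_injective (C_injective (R := R))) X m)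
  rw [← pow_mul, map_mul, map_prod, map_mul, map_pow,
    ← hexpand (mul_ne_zero hp.ne_zero hp.ne_zero) le_rfl, ← hexpand hp.ne_zero le_rfl,
    ← hexpand hp.ne_zero hle] at hfinite
  rw [map_mul, map_prod, map_pow, pow_succ' _ p, ← hfinite]
  simp only [hrescale]

theorem prod_range_five_add [IsDomain R] {ζ : R} (hζ : IsPrimitiveRoot ζ 5) (a b c : R) :
    ∏ i ∈ range 5, (a + ζ ^ i * c + (ζ ^ i) ^ 2 * b) =
      a ^ 5 + b ^ 5 + c ^ 5 - 5 * a * b * c ^ 3 + 5 * a ^ 2 * b ^ 2 * c := by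
  have hsum := hζ.geom_sum_eq_zero (by norm_num)
  simp only [sum_range_succ, sum_range_zero, prod_range_succ, prod_range_zero] at hsum ⊢
  grind [hζ.pow_eq_one]

theorem prod_rescale_pentagonalSeries [IsDomain R] [CharZero R] {ζ : R}
    (hζ : IsPrimitiveRoot ζ 5) :
    ∏ i ∈ range 5, rescale (ζ ^ i) (pentagonalSeries R) =
      residuePart (0 : ZMod 5) (pentagonalSeries R) ^ 5 +
        residuePart (2 : ZMod 5) (pentagonalSeries R) ^ 5 +
        11 * residuePart (1 : ZMod 5) (pentagonalSeries R) ^ 5 := by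
  have hpow (i : ℕ) : (ζ ^ i) ^ 5 = 1 := by rw [pow_right_comm, hζ.pow_eq_one, one_pow]
  have h0 (i : ℕ) := rescale_residuePart (hpow i) 0 (pentagonalSeries R)
  have h1 (i : ℕ) := rescale_residuePart (hpow i) 1 (pentagonalSeries R)
  have h2 (i : ℕ) := rescale_residuePart (hpow i) 2 (pentagonalSeries R)
  have hab := residuePart_zero_mul_residuePart_two R
  have hE := pentagonalSeries_eq_add_residuePart R
  simp only [Nat.cast_zero, Nat.cast_one, Nat.cast_ofNat] at h0 h1 h2
  set a := residuePart (0 : ZMod 5) (pentagonalSeries R)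
  set c := residuePart (1 : ZMod 5) (pentagonalSeries R)
  set b := residuePart (2 : ZMod 5) (pentagonalSeries R)
  have hrescale (i : ℕ) :
      rescale (ζ ^ i) (pentagonalSeries R) = a + C ζ ^ i * c + (C ζ ^ i) ^ 2 * b := by
    simp only [hE, map_add, h0, h1, h2, pow_zero, pow_one, map_one, one_mul, map_pow]
  simp only [hrescale, prod_range_five_add (hζ.map_of_injective (C_injective (R := R)))]
  linear_combination (5 * c * (a * b - 2 * c ^ 2)) * hab

end RootsOfUnity

section PartitionSeries

open PowerSeries

variable (R : Type*) [CommRing R]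

/-- The generating function `∑ p(n) Xⁿ` of the number of partitions. -/
noncomputable def partitionSeries : R⟦X⟧ :=
  .mk fun n ↦ (Fintype.card (Nat.Partition n) : R)

theorem coeff_partitionSeries (n : ℕ) :
    (partitionSeries R).coeff n = (Fintype.card (Nat.Partition n) : R) :=
  coeff_mk _ _

open WithPiTopology in
theorem hasProd_partitionSeries [TopologicalSpace R] [IsTopologicalSemiring R] [T2Space R] :
    HasProd (fun i ↦ ∑' j : ℕ, (X : R⟦X⟧) ^ ((i + 1) * j)) (partitionSeries R) := by
  have h := Nat.Partition.hasProd_powerSeriesMk_card_restricted R fun _ ↦ True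
  simpa [Nat.Partition.restricted, partitionSeries] using h

open WithPiTopology in
theorem partitionSeries_mul_pentagonalSeries : partitionSeries R * pentagonalSeries R = 1 := by
  let _ : TopologicalSpace R := ⊥
  have : DiscreteTopology R := ⟨rfl⟩
  have h := (hasProd_partitionSeries R).mul (hasProd_one_sub_X_pow R)
  have hfactor (i : ℕ) : (∑' j : ℕ, (X : R⟦X⟧) ^ ((i + 1) * j)) * (1 - X ^ (i + 1)) = 1 := by
    simp_rw [pow_mul]
    exact tsum_pow_mul_one_sub_of_constantCoeff_eq_zero (by simp)
  simp only [hfactor] at h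
  exact h.unique hasProd_one

end PartitionSeries

section FormalIdentity

open Finset PowerSeries

variable {R S : Type*} [CommRing R] [CommRing S]

theorem expand_injective {p : ℕ} (hp : p ≠ 0) : Function.Injective (expand (R := R) p hp) :=
  fun F G h ↦ by
    ext n
    rw [← coeff_expand_mul p hp, h, coeff_expand_mul]

theorem map_dissect (f : R →+* S) (m r : ℕ) (F : R⟦X⟧) :
    map f (dissect m r F) = dissect m r (map f F) := by
  ext n
  simp only [coeff_map, coeff_dissect]

theorem map_partitionSeries (f : R →+* S) : map f (partitionSeries R) = partitionSeries S := by
  ext n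
  simp only [coeff_map, coeff_partitionSeries, map_natCast]

theorem map_pentagonalSeries (f : R →+* S) : map f (pentagonalSeries R) = pentagonalSeries S := by
  ext n
  rw [coeff_map]
  by_cases hn : n ∈ Set.range pentagonal
  · obtain ⟨k, rfl⟩ := hn
    simp [coeff_pentagonalSeries_pentagonal]
  · rw [coeff_pentagonalSeries_eq_zero R hn, coeff_pentagonalSeries_eq_zero S hn, map_zero]

theorem dissect_five_four_partitionSeries_of_isPrimitiveRoot [IsDomain R] [CharZero R] {ζ : R}
    (hζ : IsPrimitiveRoot ζ 5) : dissect 5 4 (partitionSeries R) =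
      5 * expand 5 (by norm_num) (pentagonalSeries R) ^ 5 * partitionSeries R ^ 6 := by
  have hPE := partitionSeries_mul_pentagonalSeries R
  have hnorm := prod_rescale_pentagonalSeries_mul_expand Nat.prime_five hζ
  have hfour : residuePart (4 : ZMod 5) (partitionSeries R) =
      X ^ 4 * expand 5 (by norm_num) (dissect 5 4 (partitionSeries R)) :=
    residuePart_natCast (by norm_num) _
  have hsolve := residuePart_four_mul_of_mul_pentagonalSeries_eq_one R hPE
  rw [← prod_rescale_pentagonalSeries hζ, hfour, residuePart_one_pentagonalSeries] at hsolve
  set E := pentagonalSeries R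
  set P := partitionSeries R
  set D := dissect 5 4 P
  have hexpand : X ^ 4 * expand 5 (by norm_num) (D * E ^ 6) =
      X ^ 4 * expand 5 (by norm_num) (5 * expand 5 (by norm_num) E ^ 5) := by
    simp only [map_mul, map_pow, map_ofNat, ← expand_mul, Nat.reduceMul] at hnorm ⊢
    linear_combination expand 25 (by norm_num) E * hsolve - X ^ 4 * expand 5 (by norm_num) D * hnorm
  have hDE := expand_injective _ (mul_left_cancel₀ (pow_ne_zero 4 X_ne_zero) hexpand)
  have hPE6 : (P * E) ^ 6 = 1 := by rw [hPE, one_pow]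
  linear_combination P ^ 6 * hDE - D * hPE6

theorem dissect_five_four_partitionSeries (R : Type*) [CommRing R] :
    dissect 5 4 (partitionSeries R) =
      5 * expand 5 (by norm_num) (pentagonalSeries R) ^ 5 * partitionSeries R ^ 6 := by
  have hint : dissect 5 4 (partitionSeries ℤ) =
      5 * expand 5 (by norm_num) (pentagonalSeries ℤ) ^ 5 * partitionSeries ℤ ^ 6 := by
    apply map_injective (Int.castRingHom ℂ) Int.cast_injective
    simpa [map_dissect, map_partitionSeries, map_pentagonalSeries, map_ofNat] using
      dissect_five_four_partitionSeries_of_isPrimitiveRoot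
        (Complex.isPrimitiveRoot_exp 5 (by norm_num))
  simpa [map_dissect, map_partitionSeries, map_pentagonalSeries, map_ofNat] using
    congrArg (map (Int.castRingHom R)) hint

end FormalIdentity

section Evaluation

open Finset PowerSeries

variable {𝕜 : Type*} [NormedField 𝕜]

/-- The power series `F` converges absolutely at the point `q`, with sum `v`. Absolute convergence
is part of the definition because it is not automatic over an ultrametric field. -/
structure HasValueAt (F : 𝕜⟦X⟧) (q v : 𝕜) : Prop where
  summable_norm : Summable fun n ↦ ‖F.coeff n * q ^ n‖
  hasSum : HasSum (fun n ↦ F.coeff n * q ^ n) v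

namespace HasValueAt

variable {F G : 𝕜⟦X⟧} {q v w : 𝕜}

theorem unique (hv : HasValueAt F q v) (hw : HasValueAt F q w) : v = w :=
  hv.hasSum.unique hw.hasSum

theorem monomial (k : ℕ) (a q : 𝕜) : HasValueAt (monomial k a) q (a * q ^ k) := by
  have hzero (n : ℕ) (hn : n ≠ k) : (PowerSeries.monomial k a).coeff n * q ^ n = 0 := by
    rw [coeff_monomial, if_neg hn, zero_mul]
  refine ⟨summable_of_ne_finset_zero (s := {k}) fun n hn ↦ ?_, ?_⟩
  · rw [hzero n (notMem_singleton.mp hn), norm_zero]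
  · simpa using hasSum_single k hzero

theorem one (q : 𝕜) : HasValueAt 1 q 1 := by
  simpa using monomial 0 1 q

theorem X_pow (k : ℕ) (q : 𝕜) : HasValueAt (X ^ k) q (q ^ k) := by
  simpa [monomial_eq_mk, X_pow_eq] using monomial k 1 q

theorem sub (hF : HasValueAt F q v) (hG : HasValueAt G q w) : HasValueAt (F - G) q (v - w) where
  summable_norm := by
    refine (hF.summable_norm.add hG.summable_norm).of_nonneg_of_le
      (fun n ↦ norm_nonneg _) fun n ↦ ?_
    rw [map_sub, sub_mul]
    exact norm_sub_le _ _
  hasSum := by simpa only [map_sub, sub_mul] using hF.hasSum.sub hG.hasSum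

theorem mul [CompleteSpace 𝕜] (hF : HasValueAt F q v) (hG : HasValueAt G q w) :
    HasValueAt (F * G) q (v * w) := by
  have hcoeff (n : ℕ) : (F * G).coeff n * q ^ n =
      ∑ p ∈ antidiagonal n, F.coeff p.1 * q ^ p.1 * (G.coeff p.2 * q ^ p.2) := by
    rw [coeff_mul, sum_mul]
    refine sum_congr rfl fun p hp ↦ ?_
    rw [← mem_antidiagonal.mp hp, pow_add, mul_mul_mul_comm]
  have hsummable := summable_norm_sum_mul_antidiagonal_of_summable_norm hF.summable_norm
    hG.summable_norm
  have hsum := tsum_mul_tsum_eq_tsum_sum_antidiagonal_of_summable_norm hF.summable_norm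
    hG.summable_norm
  simp only [← hcoeff] at hsummable hsum
  rw [hF.hasSum.tsum_eq, hG.hasSum.tsum_eq] at hsum
  exact ⟨hsummable, hsum ▸ hsummable.of_norm.hasSum⟩

theorem pow [CompleteSpace 𝕜] (hF : HasValueAt F q v) (k : ℕ) : HasValueAt (F ^ k) q (v ^ k) := by
  induction k with
  | zero => simpa only [pow_zero] using one q
  | succ k ih => simpa only [pow_succ] using ih.mul hF

theorem expand {p : ℕ} (hp : p ≠ 0) (hF : HasValueAt F (q ^ p) v) :
    HasValueAt (expand p hp F) q v := by
  have hinj := mul_right_injective₀ hp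
  have hzero (n : ℕ) (hn : n ∉ Set.range (p * ·)) :
      (PowerSeries.expand p hp F).coeff n * q ^ n = 0 := by
    rw [coeff_expand_of_not_dvd p hp F fun ⟨k, hk⟩ ↦ hn ⟨k, hk.symm⟩, zero_mul]
  have hcomp : (fun n ↦ (PowerSeries.expand p hp F).coeff n * q ^ n) ∘ (p * ·) =
      fun n ↦ F.coeff n * (q ^ p) ^ n := by
    funext n
    rw [Function.comp_apply, coeff_expand_mul, pow_mul]
  refine ⟨?_, (hinj.hasSum_iff hzero).mp (hcomp ▸ hF.hasSum)⟩
  refine (hinj.summable_iff fun n hn ↦ by rw [hzero n hn, norm_zero]).mp ?_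
  simpa only [Function.comp_def, coeff_expand_mul, pow_mul] using hF.summable_norm

theorem mk_one (hq : ‖q‖ < 1) : HasValueAt (PowerSeries.mk 1) q (1 - q)⁻¹ where
  summable_norm := by simpa using summable_geometric_of_lt_one (norm_nonneg q) hq
  hasSum := by simpa using hasSum_geometric_of_norm_lt_one hq

theorem qProd [CompleteSpace 𝕜] (q : 𝕜) (n : ℕ) : HasValueAt (qProd X n) q (qProd q n) := by
  induction n with
  | zero => simpa only [_root_.qProd, range_zero, prod_empty] using one q
  | succ n ih =>
    rw [qProd_succ, qProd_succ]
    exact ih.mul ((one q).sub (X_pow _ q))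

end HasValueAt

end Evaluation

section BoundedPartitions

open Finset PowerSeries

/-- The generating function of the partitions with parts at most `n`. -/
noncomputable def boundedPartitionSeries (n : ℕ) : ℝ⟦X⟧ :=
  ∏ i ∈ range n, expand (i + 1) i.succ_ne_zero (PowerSeries.mk 1)

theorem boundedPartitionSeries_succ (n : ℕ) : boundedPartitionSeries (n + 1) =
    boundedPartitionSeries n * expand (n + 1) n.succ_ne_zero (PowerSeries.mk 1) :=
  prod_range_succ _ n

theorem boundedPartitionSeries_mul_qProd (n : ℕ) : boundedPartitionSeries n * qProd X n = 1 := by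
  rw [boundedPartitionSeries, qProd, ← prod_mul_distrib]
  refine prod_eq_one fun i _ ↦ ?_
  have h := congrArg (expand (i + 1) i.succ_ne_zero) (mk_one_mul_one_sub_eq_one ℝ)
  simpa [expand_X] using h

theorem coeff_boundedPartitionSeries {m n : ℕ} (h : m ≤ n) :
    (boundedPartitionSeries n).coeff m = Fintype.card (Nat.Partition m) := by
  have hdiff : boundedPartitionSeries n - partitionSeries ℝ =
      partitionSeries ℝ * boundedPartitionSeries n * (pentagonalSeries ℝ - qProd X n) := by
    linear_combination partitionSeries ℝ * boundedPartitionSeries_mul_qProd n -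
      boundedPartitionSeries n * partitionSeries_mul_pentagonalSeries ℝ
  have hdvd : X ^ (m + 1) ∣ boundedPartitionSeries n - partitionSeries ℝ :=
    hdiff ▸ (X_pow_dvd_pentagonalSeries_sub_qProd ℝ h).mul_left _
  rw [← coeff_partitionSeries, ← sub_eq_zero, ← map_sub, X_pow_dvd_iff.mp hdvd m m.lt_succ_self]

theorem hasValueAt_boundedPartitionSeries {r : ℝ} (h0 : 0 ≤ r) (h1 : r < 1) (n : ℕ) :
    HasValueAt (boundedPartitionSeries n) r (qProd r n)⁻¹ := by
  induction n with
  | zero => simpa [boundedPartitionSeries, qProd] using HasValueAt.one r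
  | succ n ih =>
    have hnorm : ‖r ^ (n + 1)‖ < 1 := by
      rw [Real.norm_of_nonneg (pow_nonneg h0 _)]
      exact pow_lt_one₀ h0 h1 n.succ_ne_zero
    rw [boundedPartitionSeries_succ, qProd_succ, mul_inv]
    exact ih.mul ((HasValueAt.mk_one hnorm).expand _)

variable {𝕜 : Type*} [NormedField 𝕜]

theorem norm_coeff_mul_le {F F' : 𝕜⟦X⟧} {G G' : ℝ⟦X⟧} (h : ∀ n, ‖F.coeff n‖ ≤ G.coeff n)
    (h' : ∀ n, ‖F'.coeff n‖ ≤ G'.coeff n) (n : ℕ) : ‖(F * F').coeff n‖ ≤ (G * G').coeff n := by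
  rw [coeff_mul, coeff_mul]
  refine norm_sum_le_of_le _ fun p _ ↦ ?_
  rw [norm_mul]
  exact mul_le_mul (h _) (h' _) (norm_nonneg _) ((norm_nonneg _).trans (h _))

theorem norm_coeff_one_sub_X_pow_le (k n : ℕ) : ‖((1 : 𝕜⟦X⟧) - X ^ (k + 1)).coeff n‖ ≤
    (expand (k + 1) k.succ_ne_zero (PowerSeries.mk 1) : ℝ⟦X⟧).coeff n := by
  rw [map_sub, coeff_one, coeff_X_pow, coeff_expand]
  rcases eq_or_ne n 0 with rfl | h0
  · simp
  rcases eq_or_ne n (k + 1) with rfl | h1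
  · simp
  · rw [if_neg h0, if_neg h1]
    split_ifs <;> simp

theorem norm_coeff_qProd_le_boundedPartitionSeries (n m : ℕ) :
    ‖(qProd (X : 𝕜⟦X⟧) n).coeff m‖ ≤ (boundedPartitionSeries n).coeff m := by
  induction n generalizing m with
  | zero =>
    simp only [qProd, boundedPartitionSeries, range_zero, prod_empty, coeff_one]
    split_ifs <;> simp
  | succ n ih =>
    rw [qProd_succ, boundedPartitionSeries_succ]
    exact norm_coeff_mul_le ih (norm_coeff_one_sub_X_pow_le n) m

theorem coeff_boundedPartitionSeries_nonneg (n m : ℕ) : 0 ≤ (boundedPartitionSeries n).coeff m :=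
  (norm_nonneg _).trans (norm_coeff_qProd_le_boundedPartitionSeries (𝕜 := ℝ) n m)

end BoundedPartitions

section Convergence

open Filter PowerSeries Topology

variable {𝕜 : Type*} [NormedField 𝕜] {q : 𝕜}

theorem summable_norm_neg_pow_succ (hq : ‖q‖ < 1) : Summable fun n : ℕ ↦ ‖-q ^ (n + 1)‖ := by
  simpa using (summable_nat_add_iff 1).mpr (summable_geometric_of_lt_one (norm_nonneg q) hq)

variable [CompleteSpace 𝕜]

theorem tendsto_qProd (hq : ‖q‖ < 1) :
    Tendsto (qProd q) atTop (𝓝 (∏' n : ℕ, (1 - q ^ (n + 1)))) := by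
  have h : Multipliable fun n : ℕ ↦ 1 - q ^ (n + 1) := by
    simp_rw [sub_eq_add_neg]
    exact multipliable_one_add_of_summable (summable_norm_neg_pow_succ hq)
  exact h.hasProd.tendsto_prod_nat

theorem tprod_one_sub_pow_ne_zero (hq : ‖q‖ < 1) : ∏' n : ℕ, (1 - q ^ (n + 1)) ≠ 0 := by
  simp_rw [sub_eq_add_neg]
  refine tprod_one_add_ne_zero_of_summable (fun n h ↦ ?_) (summable_norm_neg_pow_succ hq)
  have hone : q ^ (n + 1) = 1 := (add_neg_eq_zero.mp h).symm
  have hlt := pow_lt_one₀ (norm_nonneg q) hq n.succ_ne_zero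
  rw [← norm_pow, hone, norm_one] at hlt
  exact lt_irrefl _ hlt

theorem exists_summable_coeff_boundedPartitionSeries_mul_pow_le {r : ℝ} (h0 : 0 ≤ r) (h1 : r < 1) :
    ∃ g : ℕ → ℝ, Summable g ∧ ∀ n m, (boundedPartitionSeries n).coeff m * r ^ m ≤ g m := by
  obtain ⟨ρ, hrρ, hρ1⟩ := exists_between h1
  have hρ0 : 0 < ρ := h0.trans_lt hrρ
  have hρ : ‖ρ‖ < 1 := by rwa [Real.norm_of_nonneg hρ0.le]
  obtain ⟨c, hc⟩ := ((tendsto_qProd hρ).inv₀ (tprod_one_sub_pow_ne_zero hρ)).bddAbove_range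
  have hbound (n m : ℕ) : (boundedPartitionSeries n).coeff m * ρ ^ m ≤ c :=
    (le_hasSum (hasValueAt_boundedPartitionSeries hρ0.le hρ1 n).hasSum m fun k _ ↦
      mul_nonneg (coeff_boundedPartitionSeries_nonneg n k) (pow_nonneg hρ0.le k)).trans
        (hc ⟨n, rfl⟩)
  refine ⟨fun m ↦ c * (r / ρ) ^ m, (summable_geometric_of_lt_one (div_nonneg h0 hρ0.le)
    ((div_lt_one hρ0).mpr hrρ)).mul_left c, fun n m ↦ ?_⟩
  calc (boundedPartitionSeries n).coeff m * r ^ m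
      = (boundedPartitionSeries n).coeff m * ρ ^ m * (r / ρ) ^ m := by
        rw [mul_assoc, ← mul_pow, mul_div_cancel₀ r hρ0.ne']
    _ ≤ c * (r / ρ) ^ m := by gcongr; exact hbound n m

theorem hasValueAt_pentagonalSeries (hq : ‖q‖ < 1) :
    HasValueAt (pentagonalSeries 𝕜) q (∏' n : ℕ, (1 - q ^ (n + 1))) := by
  obtain ⟨g, hg, hle⟩ :=
    exists_summable_coeff_boundedPartitionSeries_mul_pow_le (norm_nonneg q) hq
  have hbound (n m : ℕ) : ‖(qProd (X : 𝕜⟦X⟧) n).coeff m * q ^ m‖ ≤ g m := by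
    refine le_trans ?_ (hle n m)
    rw [norm_mul, norm_pow]
    gcongr
    exact norm_coeff_qProd_le_boundedPartitionSeries n m
  have hcoeff {n m : ℕ} (h : m ≤ n) :
      (qProd (X : 𝕜⟦X⟧) n).coeff m = (pentagonalSeries 𝕜).coeff m := by
    rw [eq_comm, ← sub_eq_zero, ← map_sub]
    exact X_pow_dvd_iff.mp (X_pow_dvd_pentagonalSeries_sub_qProd 𝕜 h) m m.lt_succ_self
  have hsummable : Summable fun m ↦ ‖(pentagonalSeries 𝕜).coeff m * q ^ m‖ :=
    hg.of_nonneg_of_le (fun _ ↦ norm_nonneg _) fun m ↦ hcoeff (le_refl m) ▸ hbound m m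
  have hlim := tendsto_tsum_of_dominated_convergence hg
    (f := fun n m ↦ (qProd (X : 𝕜⟦X⟧) n).coeff m * q ^ m)
    (g := fun m ↦ (pentagonalSeries 𝕜).coeff m * q ^ m)
    (fun m ↦ tendsto_atTop_of_eventually_const fun n (hn : m ≤ n) ↦ by rw [hcoeff hn])
    (.of_forall hbound)
  simp_rw [(HasValueAt.qProd q _).hasSum.tsum_eq] at hlim
  exact ⟨hsummable, tendsto_nhds_unique hlim (tendsto_qProd hq) ▸ hsummable.of_norm.hasSum⟩

theorem hasValueAt_partitionSeries (hq : ‖q‖ < 1) :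
    HasValueAt (partitionSeries 𝕜) q (∏' n : ℕ, (1 - q ^ (n + 1)))⁻¹ := by
  obtain ⟨g, hg, hle⟩ :=
    exists_summable_coeff_boundedPartitionSeries_mul_pow_le (norm_nonneg q) hq
  have hsummable : Summable fun n ↦ ‖(partitionSeries 𝕜).coeff n * q ^ n‖ := by
    refine hg.of_nonneg_of_le (fun _ ↦ norm_nonneg _) fun n ↦ le_trans ?_ (hle n n)
    rw [norm_mul, norm_pow, coeff_partitionSeries, coeff_boundedPartitionSeries le_rfl]
    gcongr
    simpa using Nat.norm_cast_le (α := 𝕜) (Fintype.card (Nat.Partition n))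
  have hvalue : HasValueAt (partitionSeries 𝕜) q (∑' n, (partitionSeries 𝕜).coeff n * q ^ n) :=
    ⟨hsummable, hsummable.of_norm.hasSum⟩
  have hmul := hvalue.mul (hasValueAt_pentagonalSeries hq)
  rw [partitionSeries_mul_pentagonalSeries] at hmul
  rwa [eq_inv_of_mul_eq_one_left (hmul.unique (.one q))] at hvalue

end Convergence

open PowerSeries in
theorem ramanujan_partition_mod5_general {𝕜 : Type*} [NormedField 𝕜] [CompleteSpace 𝕜] {q : 𝕜}
    (hq : ‖q‖ < 1) :
    HasSum (fun n : ℕ ↦ (Fintype.card (Nat.Partition (5 * n + 4)) : 𝕜) * q ^ n)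
      (5 * (∏' n : ℕ, (1 - (q ^ 5) ^ (n + 1))) ^ 5 / (∏' n : ℕ, (1 - q ^ (n + 1))) ^ 6) := by
  have hq5 : ‖q ^ 5‖ < 1 := by
    rw [norm_pow]
    exact pow_lt_one₀ (norm_nonneg q) hq (by norm_num)
  have hfive : HasValueAt (5 : 𝕜⟦X⟧) q 5 := by
    simpa [map_ofNat C 5] using HasValueAt.monomial 0 5 q
  have hvalue := (hfive.mul (((hasValueAt_pentagonalSeries hq5).expand (by norm_num)).pow 5)).mul
    ((hasValueAt_partitionSeries hq).pow 6)
  rw [← dissect_five_four_partitionSeries, inv_pow, ← div_eq_mul_inv] at hvalue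
  simpa only [coeff_dissect, coeff_partitionSeries] using hvalue.hasSum

/-- Ramanujan's "most beautiful" identity:
`∑_{n ≥ 0} p(5n+4) qⁿ = 5 (q⁵;q⁵)_∞⁵ / (q;q)_∞⁶`, where `p(n)` is the number of
partitions of `n` (stated for `|q| < 1`). -/
theorem ramanujan_partition_mod5 (q : ℂ) (hq : ‖q‖ < 1) :
    ∑' n : ℕ, (Fintype.card (Nat.Partition (5 * n + 4)) : ℂ) * q ^ n
      = 5 * (∏' n : ℕ, (1 - (q ^ 5) ^ (n + 1))) ^ 5 / (∏' n : ℕ, (1 - q ^ (n + 1))) ^ 6 :=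
  (ramanujan_partition_mod5_general hq).tsum_eq
end

section
/- Let L₁(q) = ∏_{n≥0} 1/((1-q^{5n+2})(1-q^{5n+3})), with coefficients a(n), so a(n) counts partitions of n into parts ≡ ±2 mod 5. Then L₁ satisfies the ODE (q d/dq)² F + (1/5 + 4∑_{n≥1}σ₁(n)q^n)(q d/dq) F + (11/15)·∑_{n≥1}(σ₁(n) - σ₃(n))q^n · F = 0. -/
open scoped BigOperators

/-!
Let `h = q F' / F` be the logarithmic derivative of the product `F`. It is the generating function
of the sum `τ(n)` of the divisors of `n` congruent to `±2` modulo `5`, and `F` solves the equation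
if and only if `h` solves the Riccati equation
`q h' + h² + (1/5 + 4 ∑ σ₁(n) qⁿ) h + (11/15) ∑ (σ₁(n) - σ₃(n)) qⁿ = 0`.

The Riccati equation expresses convolutions of `τ` and `σ₁` through divisor sums. These formulas
follow from an identity of Liouville: the shear `(a, b, x, y) ↦ (a - b, b, x, x + y)` maps the
solutions of `a x + b y = n` with `a > b` onto those with `x < y`, so that, for every `f` with the
symmetries of the triples `a + b + c = 0`, summing `f(a, -b) - f(a, b)` over all solutions leaves
only the diagonals `a = b` and `x = y`. The function `f` used here is quadratic in `a` and `b`, with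
coefficients depending on `a` and `b` modulo `5`.
-/

namespace RogersRamanujan

section BilinearSolutions

open Finset

variable {M : Type*}

/-- The solutions `((a, b), (x, y))` of `a * x + b * y = n` in positive integers. -/
def bilinearSolutions (n : ℕ) : Finset ((ℕ × ℕ) × (ℕ × ℕ)) :=
  {p ∈ (Icc 1 n ×ˢ Icc 1 n) ×ˢ (Icc 1 n ×ˢ Icc 1 n) | p.1.1 * p.2.1 + p.1.2 * p.2.2 = n}

lemma mem_bilinearSolutions {n a b x y : ℕ} :
    ((a, b), (x, y)) ∈ bilinearSolutions n ↔
      0 < a ∧ 0 < b ∧ 0 < x ∧ 0 < y ∧ a * x + b * y = n := by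
  simp only [bilinearSolutions, mem_filter, mem_product, mem_Icc]
  constructor
  · rintro ⟨⟨⟨⟨ha, -⟩, hb, -⟩, ⟨hx, -⟩, hy, -⟩, h⟩
    exact ⟨ha, hb, hx, hy, h⟩
  · rintro ⟨ha, hb, hx, hy, h⟩
    have ha_le := Nat.le_mul_of_pos_right a hx
    have hb_le := Nat.le_mul_of_pos_right b hy
    have hx_le := Nat.le_mul_of_pos_left x ha
    have hy_le := Nat.le_mul_of_pos_left y hb
    refine ⟨⟨⟨⟨ha, ?_⟩, hb, ?_⟩, ⟨hx, ?_⟩, hy, ?_⟩, h⟩ <;> omega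

section AddCommMonoid

variable [AddCommMonoid M]

lemma sum_bilinearSolutions_swap (n : ℕ) (f : (ℕ × ℕ) × (ℕ × ℕ) → M) :
    ∑ p ∈ bilinearSolutions n, f (p.1.swap, p.2.swap) = ∑ p ∈ bilinearSolutions n, f p := by
  refine sum_nbij' (fun p => (p.1.swap, p.2.swap)) (fun p => (p.1.swap, p.2.swap))
    ?_ ?_ ?_ ?_ ?_ <;>
  · rintro ⟨⟨a, b⟩, x, y⟩
    simp +contextual [mem_bilinearSolutions, add_comm]

lemma sum_bilinearSolutions_transpose (n : ℕ) (f : (ℕ × ℕ) × (ℕ × ℕ) → M) :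
    ∑ p ∈ bilinearSolutions n, f p.swap = ∑ p ∈ bilinearSolutions n, f p := by
  refine sum_nbij' Prod.swap Prod.swap ?_ ?_ ?_ ?_ ?_ <;>
  · rintro ⟨⟨a, b⟩, x, y⟩
    simp +contextual [mem_bilinearSolutions, mul_comm]

lemma sum_bilinearSolutions_shear (n : ℕ) (f : (ℕ × ℕ) × (ℕ × ℕ) → M) :
    ∑ p ∈ bilinearSolutions n with p.1.2 < p.1.1, f p =
      ∑ p ∈ bilinearSolutions n with p.2.1 < p.2.2,
        f ((p.1.1 + p.1.2, p.1.2), (p.2.1, p.2.2 - p.2.1)) := by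
  refine sum_nbij' (fun p => ((p.1.1 - p.1.2, p.1.2), (p.2.1, p.2.1 + p.2.2)))
    (fun p => ((p.1.1 + p.1.2, p.1.2), (p.2.1, p.2.2 - p.2.1))) ?_ ?_ ?_ ?_ ?_ <;>
    rintro ⟨⟨a, b⟩, x, y⟩ h <;>
    simp only [mem_filter, mem_bilinearSolutions] at h ⊢ <;>
    obtain ⟨⟨ha, hb, hx, hy, h⟩, hlt⟩ := h <;>
    obtain ⟨c, rfl⟩ := Nat.exists_eq_add_of_lt hlt
  · rw [add_assoc, Nat.add_sub_cancel_left, ← h]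
    exact ⟨⟨by omega, hb, hx, by omega, by ring⟩, by omega⟩
  · rw [add_assoc, Nat.add_sub_cancel_left, ← h]
    exact ⟨⟨by omega, hb, hx, by omega, by ring⟩, by omega⟩
  all_goals simp [add_assoc, add_comm]

lemma sum_eq_sum_filter_lt_add_eq_add_gt {ι α : Type*} [LinearOrder α] (s : Finset ι) (u v : ι → α)
    (f : ι → M) :
    ∑ i ∈ s, f i =
      ∑ i ∈ s with u i < v i, f i + ∑ i ∈ s with u i = v i, f i + ∑ i ∈ s with v i < u i, f i := by
  simp only [sum_filter, ← sum_add_distrib]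
  refine sum_congr rfl fun i _ => ?_
  rcases lt_trichotomy (u i) (v i) with h | h | h
  · simp [h, h.ne, h.not_gt]
  · simp [h]
  · simp [h, h.ne', h.not_gt]

lemma sum_bilinearSolutions_right_diagonal (n : ℕ) (f : ℕ → ℕ → ℕ → M) :
    ∑ p ∈ bilinearSolutions n with p.2.1 = p.2.2, f p.1.1 p.1.2 p.2.1 =
      ∑ d ∈ n.divisors, ∑ a ∈ Ico 1 d, f a (d - a) (n / d) := by
  have div_eq {a b x : ℕ} (ha : 0 < a) (h : a * x + b * x = n) : n / (a + b) = x := by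
    rw [← h, ← add_mul, Nat.mul_div_cancel_left x (by omega)]
  rw [sum_sigma']
  refine sum_nbij' (fun p => ⟨p.1.1 + p.1.2, p.1.1⟩)
    (fun s => ((s.2, s.1 - s.2), (n / s.1, n / s.1))) ?_ ?_ ?_ ?_ ?_
  · rintro ⟨⟨a, b⟩, x, y⟩ h
    simp only [mem_filter, mem_bilinearSolutions] at h
    obtain ⟨⟨ha, hb, hx, -, h⟩, rfl⟩ := h
    have := Nat.mul_pos ha hx
    simp only [mem_sigma, Nat.mem_divisors, mem_Ico]
    exact ⟨⟨⟨x, by rw [← h, add_mul]⟩, by omega⟩, ha, by omega⟩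
  · rintro ⟨d, a⟩ h
    simp only [mem_sigma, Nat.mem_divisors, mem_Ico] at h
    obtain ⟨⟨⟨x, rfl⟩, hn⟩, ha, had⟩ := h
    have hd : 0 < d := by omega
    have hx : 0 < x := Nat.pos_of_ne_zero (right_ne_zero_of_mul hn)
    simp only [mem_filter, mem_bilinearSolutions, Nat.mul_div_cancel_left x hd]
    exact ⟨⟨ha, by omega, hx, hx, by rw [← add_mul, Nat.add_sub_cancel' had.le]⟩, trivial⟩
  · rintro ⟨⟨a, b⟩, x, y⟩ h
    simp only [mem_filter, mem_bilinearSolutions] at h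
    obtain ⟨⟨ha, -, -, -, h⟩, rfl⟩ := h
    simp [div_eq ha h]
  · rintro ⟨d, a⟩ h
    simp only [mem_sigma, mem_Ico] at h
    simp [Nat.add_sub_cancel' h.2.2.le]
  · rintro ⟨⟨a, b⟩, x, y⟩ h
    simp only [mem_filter, mem_bilinearSolutions] at h
    obtain ⟨⟨ha, -, -, -, h⟩, rfl⟩ := h
    simp [div_eq ha h]

lemma sum_bilinearSolutions_left_diagonal (n : ℕ) (g : ℕ → M) :
    ∑ p ∈ bilinearSolutions n with p.1.1 = p.1.2, g p.1.1 =
      ∑ d ∈ n.divisors, (n / d - 1) • g d :=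
  calc ∑ p ∈ bilinearSolutions n with p.1.1 = p.1.2, g p.1.1
    _ = ∑ p ∈ bilinearSolutions n with p.2.1 = p.2.2, g p.2.1 := by
        simp only [sum_filter]
        rw [← sum_bilinearSolutions_transpose]
        simp
    _ = ∑ d ∈ n.divisors, (d - 1) • g (n / d) := by
        simp [sum_bilinearSolutions_right_diagonal n fun _ _ x => g x]
    _ = ∑ d ∈ n.divisors, (n / d - 1) • g d := by
        rw [← Nat.sum_div_divisors n fun d => (n / d - 1) • g d]
        refine sum_congr rfl fun d hd => ?_
        rw [Nat.div_div_self (Nat.dvd_of_mem_divisors hd) (Nat.ne_zero_of_mem_divisors hd)]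

end AddCommMonoid

lemma sum_antidiagonal_sum_divisors_mul_sum_divisors [NonUnitalNonAssocSemiring M] (n : ℕ)
    (f g : ℕ → M) :
    ∑ k ∈ antidiagonal n, (∑ d ∈ k.1.divisors, f d) * ∑ d ∈ k.2.divisors, g d =
      ∑ p ∈ bilinearSolutions n, f p.1.1 * g p.1.2 := by
  simp only [sum_mul_sum, ← sum_product', sum_sigma']
  refine sum_nbij' (fun s => (s.2, (s.1.1 / s.2.1, s.1.2 / s.2.2)))
    (fun p => ⟨(p.1.1 * p.2.1, p.1.2 * p.2.2), p.1⟩) ?_ ?_ ?_ ?_ ?_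
  · rintro ⟨⟨i, j⟩, a, b⟩ h
    simp only [mem_sigma, HasAntidiagonal.mem_antidiagonal, mem_product, Nat.mem_divisors] at h
    obtain ⟨rfl, ⟨⟨x, rfl⟩, hi⟩, ⟨y, rfl⟩, hj⟩ := h
    simp only [mul_ne_zero_iff, ← Nat.pos_iff_ne_zero] at hi hj
    simp [mem_bilinearSolutions, hi, hj]
  · rintro ⟨⟨a, b⟩, x, y⟩ h
    obtain ⟨ha, hb, hx, hy, h⟩ := mem_bilinearSolutions.1 h
    simp [h, ha.ne', hb.ne', hx.ne', hy.ne']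
  · rintro ⟨⟨i, j⟩, a, b⟩ h
    simp only [mem_sigma, mem_product, Nat.mem_divisors] at h
    simp [Nat.mul_div_cancel' h.2.1.1, Nat.mul_div_cancel' h.2.2.1]
  · rintro ⟨⟨a, b⟩, x, y⟩ h
    obtain ⟨ha, hb, -⟩ := mem_bilinearSolutions.1 h
    simp [ha, hb]
  · simp

/-- Liouville's method: if `Φ a b` depends only on the triple `(a, b, -a - b)` up to order and
sign, the shear matches the terms `Φ a (-b)` with `a > b` with the terms `Φ a b` with `x < y`. -/
theorem sum_bilinearSolutions_sub [AddCommGroup M] (n : ℕ) (Φ : ℤ → ℤ → M)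
    (hswap : ∀ a b, Φ b a = Φ a b) (hneg : ∀ a b, Φ (-a) (-b) = Φ a b)
    (hrot : ∀ a b, Φ a (-a - b) = Φ a b) :
    ∑ p ∈ bilinearSolutions n, (Φ p.1.1 (-p.1.2) - Φ p.1.1 p.1.2) =
      ∑ p ∈ bilinearSolutions n with p.1.1 = p.1.2, Φ p.1.1 (-p.1.2)
        - ∑ p ∈ bilinearSolutions n with p.2.1 = p.2.2, Φ p.1.1 p.1.2 := by
  have hswap_neg (a b : ℤ) : Φ b (-a) = Φ a (-b) := by rw [hswap, ← hneg, neg_neg]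
  have hshear (a b : ℤ) : Φ (a + b) (-b) = Φ a b := by
    rw [hswap (-b), ← hrot, show - -b - (a + b) = -a by ring, hneg, hswap]
  have hleft : ∑ p ∈ bilinearSolutions n with p.1.1 < p.1.2, Φ p.1.1 (-p.1.2) =
      ∑ p ∈ bilinearSolutions n with p.1.2 < p.1.1, Φ p.1.1 (-p.1.2) := by
    simp only [sum_filter]
    rw [← sum_bilinearSolutions_swap]
    simp [hswap_neg]
  have hright : ∑ p ∈ bilinearSolutions n with p.2.2 < p.2.1, Φ p.1.1 p.1.2 =
      ∑ p ∈ bilinearSolutions n with p.2.1 < p.2.2, Φ p.1.1 p.1.2 := by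
    simp only [sum_filter]
    rw [← sum_bilinearSolutions_swap]
    simp [hswap]
  have hmatch : ∑ p ∈ bilinearSolutions n with p.1.2 < p.1.1, Φ p.1.1 (-p.1.2) =
      ∑ p ∈ bilinearSolutions n with p.2.1 < p.2.2, Φ p.1.1 p.1.2 := by
    simp [sum_bilinearSolutions_shear n fun p => Φ p.1.1 (-p.1.2), hshear]
  have hsplit_left := sum_eq_sum_filter_lt_add_eq_add_gt (bilinearSolutions n)
    (fun p => p.1.1) (fun p => p.1.2) fun p => Φ p.1.1 (-p.1.2)
  have hsplit_right := sum_eq_sum_filter_lt_add_eq_add_gt (bilinearSolutions n)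
    (fun p => p.2.1) (fun p => p.2.2) fun p => Φ p.1.1 p.1.2
  rw [sum_sub_distrib, hsplit_left, hsplit_right, hleft, hright, hmatch]
  abel

end BilinearSolutions

section Weights

open Finset

/-- The indicator function of the residue classes `±2` modulo `5`. -/
def chi (r : ZMod 5) : ℤ := if r = 2 ∨ r = 3 then 1 else 0

lemma chi_zero : chi 0 = 0 := rfl

lemma chi_mul_self : ∀ r, chi r * chi r = chi r := by decide

/-- The weight of the residue classes `r = a + b` and `s = a` that `hexForm` attaches to the
product `a * b`. Its values are found by solving `weight_add_weight`. -/
def weight (r s : ZMod 5) : ℤ := if r = 0 then 5 * chi s else if r = 1 ∨ r = 4 then 2 else 8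

/-- The function that enters Liouville's identity. With `c = -a - b` it is the symmetric expression
`w(c) a b + w(a) b c + w(b) c a`, where the weight of a multiple of `5` also depends on the class
of the two other entries up to sign. -/
def hexForm (a b : ℤ) : ℤ :=
  weight (a + b) a * (a * b) - weight a b * (b * (a + b)) - weight b a * (a * (a + b))

lemma weight_neg_left : ∀ r s, weight (-r) s = weight r s := by decide

lemma weight_neg_right : ∀ r s, weight r (-s) = weight r s := by decide

lemma weight_add_right : ∀ r s, weight r (r + s) = weight r s := by decide

lemma weight_neg_sub_right : ∀ r s, weight r (-r - s) = weight r s := by decide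

lemma weight_add_left : ∀ r s, weight (r + s) r = weight (r + s) s := by decide

lemma weight_zero_left : ∀ s, weight 0 s = 5 * chi s := by decide

lemma weight_of_ne_zero : ∀ r s, r ≠ 0 → weight r s = 2 + 6 * chi r := by decide

lemma weight_add_weight : ∀ r s, 2 * weight r s + 2 * weight s r - weight (r - s) r
    - weight (r + s) r = 5 * (chi r * chi s + 2 * chi r + 2 * chi s) := by decide

lemma hexForm_swap (a b : ℤ) : hexForm b a = hexForm a b := by
  simp only [hexForm, add_comm (b : ZMod 5), weight_add_left (a : ZMod 5)]
  ring

lemma hexForm_neg (a b : ℤ) : hexForm (-a) (-b) = hexForm a b := by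
  simp only [hexForm, Int.cast_neg, ← neg_add, weight_neg_left, weight_neg_right]
  ring

lemma hexForm_rot (a b : ℤ) : hexForm a (-a - b) = hexForm a b := by
  have h_third : weight (-a - b) a = weight (a + b) a := by
    rw [← weight_neg_left, neg_sub, sub_neg_eq_add, add_comm]
  have h_sum : weight (a + (-a - b)) a = weight b a := by
    rw [show (a + (-a - b) : ZMod 5) = -b by ring, weight_neg_left]
  simp only [hexForm, Int.cast_neg, Int.cast_sub, weight_neg_sub_right, h_third, h_sum]
  ring

lemma hexForm_sub_hexForm (a b : ℤ) :
    hexForm a (-b) - hexForm a b = 5 * (a * b * (chi a * chi b + 2 * chi a + 2 * chi b)) := by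
  simp only [hexForm, Int.cast_neg, weight_neg_left, weight_neg_right, ← sub_eq_add_neg]
  linear_combination (a * b) * weight_add_weight a b

lemma hexForm_neg_self (a : ℤ) : hexForm a (-a) = -(5 * (chi a * a ^ 2)) := by
  simp only [hexForm, Int.cast_neg, add_neg_cancel, weight_zero_left]
  ring

/-- The periodic part of twice the second antiderivative of `a ↦ weight a s`, see
`two_mul_weight_add_one`. -/
def weightCorrection (r s : ZMod 5) : ℤ :=
  if r = 0 then 0 else chi s * (4 + 2 * chi r) - 4 - 8 * chi r

lemma weightCorrection_zero_left (s : ZMod 5) : weightCorrection 0 s = 0 := if_pos rfl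

lemma weightCorrection_one_left : ∀ s, weightCorrection 1 s = 4 * chi s - 4 := by decide

lemma two_mul_weight_add_one : ∀ r s, 2 * weight (r + 1) s = 8 + 2 * chi s +
    weightCorrection (r + 2) s - 2 * weightCorrection (r + 1) s + weightCorrection r s := by
  decide

lemma two_mul_sum_range_weight (d : ℕ) (s : ZMod 5) :
    2 * ∑ a ∈ range (d + 1), weight a s = 4 * (2 * d + 1) + chi s * (2 * d + 6) +
      weightCorrection (d + 1) s - weightCorrection d s := by
  induction d with
  | zero =>
    simp only [zero_add, range_one, sum_singleton, Nat.cast_zero, mul_zero, mul_one,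
      weight_zero_left, weightCorrection_zero_left, weightCorrection_one_left, sub_zero]
    ring
  | succ d ih =>
    have h := two_mul_weight_add_one d s
    rw [sum_range_succ, mul_add, ih]
    push_cast
    rw [add_assoc (d : ZMod 5), one_add_one_eq_two]
    linear_combination h

lemma two_mul_sum_antidiagonal_weight (d : ℕ) (s : ZMod 5) :
    2 * ∑ p ∈ antidiagonal d, weight p.1 s * p.2 =
      4 * d ^ 2 + chi s * (d ^ 2 + 5 * d) + weightCorrection d s := by
  induction d with
  | zero => simp [weightCorrection_zero_left]
  | succ d ih =>
    have h := two_mul_sum_range_weight d s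
    rw [← Nat.sum_antidiagonal_eq_sum_range_succ_mk (fun p => weight p.1 s)] at h
    rw [Nat.sum_antidiagonal_succ']
    push_cast
    simp only [mul_add, mul_one, sum_add_distrib]
    linear_combination ih + h

lemma six_mul_sum_antidiagonal_mul (d : ℕ) :
    6 * ∑ p ∈ antidiagonal d, (p.1 * p.2 : ℤ) = d ^ 3 - d := by
  have hsum (d : ℕ) : 2 * ∑ p ∈ antidiagonal d, (p.1 : ℤ) = d * (d + 1) := by
    induction d with
    | zero => simp
    | succ d ih =>
      rw [Nat.sum_antidiagonal_succ']
      push_cast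
      linear_combination ih
  induction d with
  | zero => simp
  | succ d ih =>
    rw [Nat.sum_antidiagonal_succ']
    push_cast
    simp only [mul_add, mul_one, sum_add_distrib]
    linear_combination ih + 3 * hsum d

lemma sum_range_five_mul_chi_mul (k : ℕ) (f : ℕ → ℤ) :
    ∑ a ∈ range (5 * k), chi a * f a = ∑ j ∈ range k, (f (5 * j + 2) + f (5 * j + 3)) := by
  induction k with
  | zero => simp
  | succ k ih =>
    have h5 : (5 : ZMod 5) = 0 := rfl
    have hchi : chi 0 = 0 ∧ chi 1 = 0 ∧ chi 2 = 1 ∧ chi 3 = 1 ∧ chi 4 = 0 := by decide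
    rw [mul_add]
    simp only [mul_one, sum_range_succ, ih]
    simp [h5, hchi, add_assoc]

lemma sum_range_five_mul_chi_mul_self (k : ℕ) :
    ∑ a ∈ range (5 * k), chi a * (a : ℤ) = 5 * (k : ℤ) ^ 2 := by
  rw [sum_range_five_mul_chi_mul]
  induction k with
  | zero => simp
  | succ k ih =>
    rw [sum_range_succ, ih]
    push_cast
    ring

lemma three_mul_sum_range_five_mul_chi_mul_sq (k : ℕ) :
    3 * ∑ a ∈ range (5 * k), chi a * (a : ℤ) ^ 2 = 50 * (k : ℤ) ^ 3 - 11 * k := by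
  rw [sum_range_five_mul_chi_mul k fun a => (a : ℤ) ^ 2]
  induction k with
  | zero => simp
  | succ k ih =>
    rw [sum_range_succ, mul_add, ih]
    push_cast
    ring

lemma three_mul_sum_antidiagonal_chi_mul (k : ℕ) :
    3 * ∑ p ∈ antidiagonal (5 * k), chi p.1 * (p.1 * p.2) = 25 * (k : ℤ) ^ 3 + 11 * k := by
  have h (a : ℕ) (ha : a ∈ range (5 * k)) : chi a * (a * (5 * k - a : ℕ)) =
      5 * k * (chi a * a) - chi a * (a : ℤ) ^ 2 := by
    rw [Nat.cast_sub (mem_range.1 ha).le]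
    push_cast
    ring
  rw [Nat.sum_antidiagonal_eq_sum_range_succ_mk, sum_range_succ, sum_congr rfl h, sum_sub_distrib,
    ← mul_sum, sum_range_five_mul_chi_mul_self, Nat.sub_self]
  push_cast
  linear_combination -three_mul_sum_range_five_mul_chi_mul_sq k

lemma sum_antidiagonal_eq_add_sum_Ico_add {M : Type*} [AddCommMonoid M] {d : ℕ} (hd : 0 < d)
    (f : ℕ → ℕ → M) :
    ∑ p ∈ antidiagonal d, f p.1 p.2 = f 0 d + ∑ a ∈ Ico 1 d, f a (d - a) + f d 0 := by
  rw [Nat.sum_antidiagonal_eq_sum_range_succ f, sum_range_succ, range_eq_Ico,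
    sum_eq_sum_Ico_succ_bot hd, Nat.sub_zero, Nat.sub_self]

lemma hexForm_zero_left (b : ℤ) : hexForm 0 b = -(5 * (chi b * b ^ 2)) := by
  simp only [hexForm, Int.cast_zero, zero_add, zero_mul, mul_zero, weight_zero_left, zero_sub]
  ring

lemma hexForm_of_add_eq {a b d : ℤ} (h : a + b = d) :
    hexForm a b = weight d a * (a * b) - d * (weight a d * b) - d * (weight b d * a) := by
  have ha : weight a d = weight a b := by rw [← h, Int.cast_add, weight_add_right]
  have hb : weight b d = weight b a := by rw [← h, Int.cast_add, add_comm, weight_add_right]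
  rw [ha, hb, hexForm, ← Int.cast_add, h]
  ring

lemma three_mul_sum_antidiagonal_weight_mul (d : ℕ) :
    3 * ∑ p ∈ antidiagonal d, weight d p.1 * (p.1 * p.2) =
      if (d : ZMod 5) = 0 then (d : ℤ) ^ 3 + 11 * d else (1 + 3 * chi d) * (d ^ 3 - d) := by
  split_ifs with hd
  · obtain ⟨k, rfl⟩ := (ZMod.natCast_eq_zero_iff d 5).1 hd
    simp only [hd, weight_zero_left, mul_assoc, ← mul_sum]
    push_cast
    linear_combination 5 * three_mul_sum_antidiagonal_chi_mul k
  · simp only [weight_of_ne_zero _ _ hd, ← mul_sum]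
    linear_combination (1 + 3 * chi d) * six_mul_sum_antidiagonal_mul d

lemma three_mul_sum_antidiagonal_hexForm (d : ℕ) :
    3 * ∑ p ∈ antidiagonal d, hexForm p.1 p.2 =
      -(15 * (chi d * d ^ 2)) + 3 * (chi d * d) + 11 * (d - d ^ 3) := by
  have hswap : ∑ p ∈ antidiagonal d, weight p.2 d * p.1 =
      ∑ p ∈ antidiagonal d, weight p.1 d * (p.2 : ℤ) :=
    Nat.sum_antidiagonal_swap (f := fun p => weight p.1 d * (p.2 : ℤ))
  have hsum : ∑ p ∈ antidiagonal d, hexForm p.1 p.2 =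
      ∑ p ∈ antidiagonal d, weight d p.1 * (p.1 * p.2) -
        2 * (d * ∑ p ∈ antidiagonal d, weight p.1 d * p.2) := by
    rw [two_mul]
    nth_rw 2 [← hswap]
    rw [mul_sum, mul_sum, ← sub_sub, ← sum_sub_distrib, ← sum_sub_distrib]
    refine sum_congr rfl fun p hp => ?_
    have h : (p.1 + p.2 : ℤ) = d := mod_cast HasAntidiagonal.mem_antidiagonal.1 hp
    simpa using hexForm_of_add_eq h
  have hfirst := three_mul_sum_antidiagonal_weight_mul d
  have hsecond := two_mul_sum_antidiagonal_weight d d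
  rw [hsum]
  split_ifs at hfirst with hd
  · simp only [hd, chi_zero, weightCorrection_zero_left] at hfirst hsecond ⊢
    linear_combination hfirst - 3 * d * hsecond
  · rw [weightCorrection, if_neg hd] at hsecond
    linear_combination hfirst - 3 * d * hsecond - 6 * d * chi_mul_self d

lemma three_mul_sum_Ico_hexForm (d : ℕ) :
    3 * ∑ a ∈ Ico 1 d, hexForm a (d - a : ℕ) =
      15 * (chi d * d ^ 2) + 3 * (chi d * d) + 11 * (d - d ^ 3) := by
  rcases d.eq_zero_or_pos with rfl | hd
  · simp
  have h := three_mul_sum_antidiagonal_hexForm d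
  rw [sum_antidiagonal_eq_add_sum_Ico_add hd fun a b => hexForm a b, Nat.cast_zero,
    hexForm_swap 0, hexForm_zero_left, Int.cast_natCast] at h
  linear_combination h

end Weights

section Riccati

open Finset
open scoped ArithmeticFunction.sigma

/-- The coefficients of the logarithmic derivative of the Rogers–Ramanujan product: the sum of the
divisors of `n` congruent to `±2` modulo `5`. -/
def twistedSigma (n : ℕ) : ℤ := ∑ d ∈ n.divisors, chi d * d

lemma sum_left_diagonal_hexForm (n : ℕ) :
    ∑ p ∈ bilinearSolutions n with p.1.1 = p.1.2, hexForm p.1.1 (-p.1.2) =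
      5 * ∑ d ∈ n.divisors, chi d * (d : ℤ) ^ 2 - 5 * (n * twistedSigma n) := by
  have hdiag {a b : ℕ} (h : a = b) : hexForm a (-b) = -(5 * (chi a * (a : ℤ) ^ 2)) := by
    rw [← h, hexForm_neg_self, Int.cast_natCast]
  rw [sum_congr rfl fun p hp => hdiag (mem_filter.1 hp).2,
    sum_bilinearSolutions_left_diagonal n fun a => -(5 * (chi a * (a : ℤ) ^ 2)),
    twistedSigma, mul_sum, mul_sum, mul_sum, ← sum_sub_distrib]
  refine sum_congr rfl fun d hd => ?_
  have hpos : 1 ≤ n / d := Nat.div_pos (Nat.divisor_le hd) (Nat.pos_of_mem_divisors hd)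
  have hmul : ((n / d : ℕ) : ℤ) * d = n :=
    mod_cast Nat.div_mul_cancel (Nat.dvd_of_mem_divisors hd)
  rw [nsmul_eq_mul, Nat.cast_sub hpos, Nat.cast_one]
  linear_combination (-5 * chi d * d) * hmul

lemma three_mul_sum_right_diagonal_hexForm (n : ℕ) :
    3 * ∑ p ∈ bilinearSolutions n with p.2.1 = p.2.2, hexForm p.1.1 p.1.2 =
      15 * ∑ d ∈ n.divisors, chi d * (d : ℤ) ^ 2 + 3 * twistedSigma n
        + 11 * ((σ 1 n : ℤ) - σ 3 n) := by
  rw [sum_bilinearSolutions_right_diagonal n fun a b _ => hexForm a b, mul_sum]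
  simp only [three_mul_sum_Ico_hexForm, sum_add_distrib, sum_sub_distrib, ← mul_sum, twistedSigma,
    ArithmeticFunction.sigma_apply, Nat.cast_sum, Nat.cast_pow, pow_one]

lemma sum_hexForm_sub_hexForm (n : ℕ) :
    ∑ p ∈ bilinearSolutions n, (hexForm p.1.1 (-p.1.2) - hexForm p.1.1 p.1.2) =
      5 * ∑ k ∈ antidiagonal n, twistedSigma k.1 * twistedSigma k.2
        + 20 * ∑ k ∈ antidiagonal n, σ 1 k.1 * twistedSigma k.2 := by
  have hsigma (m : ℕ) : (σ 1 m : ℤ) = ∑ d ∈ m.divisors, (d : ℤ) := by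
    simp [ArithmeticFunction.sigma_apply]
  have hswap : ∑ p ∈ bilinearSolutions n, (chi p.1.1 * p.1.1) * (p.1.2 : ℤ) =
      ∑ p ∈ bilinearSolutions n, (p.1.1 : ℤ) * (chi p.1.2 * p.1.2) := by
    rw [← sum_bilinearSolutions_swap]
    simp only [Prod.fst_swap, Prod.snd_swap, mul_comm]
  simp only [twistedSigma, hsigma, sum_antidiagonal_sum_divisors_mul_sum_divisors n]
  calc ∑ p ∈ bilinearSolutions n, (hexForm p.1.1 (-p.1.2) - hexForm p.1.1 p.1.2)
    _ = 5 * ∑ p ∈ bilinearSolutions n, (chi p.1.1 * p.1.1) * (chi p.1.2 * p.1.2)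
          + 10 * ∑ p ∈ bilinearSolutions n, (chi p.1.1 * p.1.1) * (p.1.2 : ℤ)
          + 10 * ∑ p ∈ bilinearSolutions n, (p.1.1 : ℤ) * (chi p.1.2 * p.1.2) := by
        simp only [hexForm_sub_hexForm, mul_sum, ← sum_add_distrib, Int.cast_natCast]
        exact sum_congr rfl fun p _ => by ring
    _ = _ := by
        rw [hswap]
        ring

theorem twistedSigma_riccati (n : ℕ) :
    15 * (n * twistedSigma n)
      + 15 * ∑ k ∈ antidiagonal n, twistedSigma k.1 * twistedSigma k.2
      + 3 * twistedSigma n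
      + 60 * ∑ k ∈ antidiagonal n, σ 1 k.1 * twistedSigma k.2
      + 11 * ((σ 1 n : ℤ) - σ 3 n) = 0 := by
  have hliouville := sum_bilinearSolutions_sub n hexForm hexForm_swap hexForm_neg hexForm_rot
  rw [sum_hexForm_sub_hexForm, sum_left_diagonal_hexForm] at hliouville
  linear_combination 3 * hliouville - three_mul_sum_right_diagonal_hexForm n

end Riccati

section PowerSeries

open Finset

lemma summable_norm_mul_pow {R : Type*} [SeminormedRing R] [NormOneClass R] {c : ℕ → R} {k : ℕ}
    (hc : ∀ n, ‖c n‖ ≤ (n : ℝ) ^ k) {z : R} (hz : ‖z‖ < 1) :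
    Summable fun n => ‖c n * z ^ n‖ := by
  refine .of_nonneg_of_le (fun _ => norm_nonneg _) (fun n => ?_)
    (summable_pow_mul_geometric_of_norm_lt_one k (by rwa [norm_norm] : ‖‖z‖‖ < 1))
  exact (norm_mul_le _ _).trans
    (mul_le_mul (hc n) (norm_pow_le z n) (norm_nonneg _) (by positivity))

lemma hasSum_sum_antidiagonal_mul_pow {R : Type*} [NormedCommRing R] [CompleteSpace R]
    {a b : ℕ → R} {z : R} (ha : Summable fun n => ‖a n * z ^ n‖)
    (hb : Summable fun n => ‖b n * z ^ n‖) :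
    HasSum (fun n => (∑ k ∈ antidiagonal n, a k.1 * b k.2) * z ^ n)
      ((∑' n, a n * z ^ n) * ∑' n, b n * z ^ n) := by
  have hterm (n : ℕ) : ∑ k ∈ antidiagonal n, a k.1 * z ^ k.1 * (b k.2 * z ^ k.2) =
      (∑ k ∈ antidiagonal n, a k.1 * b k.2) * z ^ n := by
    rw [sum_mul]
    refine sum_congr rfl fun k hk => ?_
    rw [← HasAntidiagonal.mem_antidiagonal.1 hk, pow_add, mul_mul_mul_comm]
  rw [tsum_mul_tsum_eq_tsum_sum_antidiagonal_of_summable_norm ha hb]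
  simpa only [hterm] using
    (summable_norm_sum_mul_antidiagonal_of_summable_norm ha hb).of_norm.hasSum

lemma hasDerivAt_tsum_mul_pow {𝕜 : Type*} [RCLike 𝕜] {c : ℕ → 𝕜} {k : ℕ}
    (hc : ∀ n, ‖c n‖ ≤ (n : ℝ) ^ k) {z : 𝕜} (hz : ‖z‖ < 1) :
    HasDerivAt (fun w => ∑' n, c n * w ^ n) (∑' n, c n * (n * z ^ (n - 1))) z := by
  obtain ⟨r, hzr, hr⟩ := exists_between hz
  have hr₀ : 0 < r := (norm_nonneg z).trans_lt hzr
  have hnorm : ‖r‖ < 1 := by rwa [Real.norm_of_nonneg hr₀.le]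
  have hu : Summable fun n : ℕ => r⁻¹ * ((n : ℝ) ^ (k + 1) * r ^ n) :=
    (summable_pow_mul_geometric_of_norm_lt_one (k + 1) hnorm).mul_left _
  refine hasDerivAt_tsum_of_isPreconnected hu Metric.isOpen_ball
    (convex_ball (0 : 𝕜) r).isPreconnected
    (fun n w _ => (hasDerivAt_pow n w).const_mul (c n)) (fun n w hw => ?_)
    (Metric.mem_ball_self hr₀)
    (summable_norm_mul_pow hc (z := 0) (by simp)).of_norm (mem_ball_zero_iff.2 hzr)
  rcases n with - | n
  · simp
  have hwr : ‖w‖ ≤ r := by simpa using (Metric.mem_ball.1 hw).le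
  calc ‖c (n + 1) * ((n + 1 : ℕ) * w ^ n)‖
    _ ≤ ((n + 1 : ℕ) : ℝ) ^ k * ((n + 1 : ℕ) * r ^ n) := by
        simp only [norm_mul, norm_pow, RCLike.norm_natCast]
        gcongr
        exact hc _
    _ = r⁻¹ * (((n + 1 : ℕ) : ℝ) ^ (k + 1) * r ^ (n + 1)) := by
        field_simp
        ring

lemma mul_deriv_tsum_mul_pow {𝕜 : Type*} [RCLike 𝕜] {c : ℕ → 𝕜} {k : ℕ}
    (hc : ∀ n, ‖c n‖ ≤ (n : ℝ) ^ k) {z : 𝕜} (hz : ‖z‖ < 1) :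
    z * deriv (fun w => ∑' n, c n * w ^ n) z = ∑' n, n * c n * z ^ n := by
  rw [(hasDerivAt_tsum_mul_pow hc hz).deriv, ← tsum_mul_left]
  refine tsum_congr fun n => ?_
  rcases n with - | n
  · simp
  · rw [Nat.add_sub_cancel, pow_succ]
    ring

end PowerSeries

section Lambert

open Finset

lemma norm_sum_divisors_le {E : Type*} [SeminormedAddCommGroup E] {f : ℕ → E} {k : ℕ}
    (hf : ∀ n, ‖f n‖ ≤ (n : ℝ) ^ k) (n : ℕ) :
    ‖∑ d ∈ n.divisors, f d‖ ≤ (n : ℝ) ^ (k + 1) := by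
  calc ‖∑ d ∈ n.divisors, f d‖
    _ ≤ ∑ _ ∈ n.divisors, (n : ℝ) ^ k := by
        refine norm_sum_le_of_le _ fun d hd => (hf d).trans ?_
        gcongr
        exact Nat.divisor_le hd
    _ = n.divisors.card * (n : ℝ) ^ k := by rw [sum_const, nsmul_eq_mul]
    _ ≤ n * (n : ℝ) ^ k := by
        gcongr
        exact Nat.card_divisors_le_self n
    _ = (n : ℝ) ^ (k + 1) := (pow_succ' _ _).symm

variable {𝕜 : Type*} [NormedField 𝕜] {z : 𝕜}

lemma norm_pow_lt_one (hz : ‖z‖ < 1) {m : ℕ} (hm : m ≠ 0) : ‖z ^ m‖ < 1 := by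
  rw [norm_pow]
  exact pow_lt_one₀ (norm_nonneg z) hz hm

lemma one_sub_pow_ne_zero (hz : ‖z‖ < 1) {m : ℕ} (hm : m ≠ 0) : 1 - z ^ m ≠ 0 := by
  refine sub_ne_zero.2 fun h => (norm_pow_lt_one hz hm).ne ?_
  rw [← h, norm_one]

lemma tsum_pnat_mul_pow_mul (a : 𝕜) (hz : ‖z‖ < 1) (m : ℕ+) :
    ∑' j : ℕ+, a * z ^ (m * j : ℕ) = a * z ^ (m : ℕ) / (1 - z ^ (m : ℕ)) := by
  rw [tsum_pnat_eq_tsum_succ (f := fun j => a * z ^ (m * j : ℕ)), div_eq_mul_inv,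
    ← tsum_geometric_of_norm_lt_one (norm_pow_lt_one hz m.ne_zero), ← tsum_mul_left]
  exact tsum_congr fun j => by rw [mul_assoc, ← pow_mul, ← pow_add, mul_add_one, add_comm]

variable [CompleteSpace 𝕜] {f : ℕ → 𝕜} {k : ℕ}

lemma summable_lambert (hf : ∀ n, ‖f n‖ ≤ (n : ℝ) ^ k) (hz : ‖z‖ < 1) :
    Summable fun n => f n * z ^ n / (1 - z ^ n) := by
  refine .of_norm_bounded
    (summable_norm_pow_mul_geometric_div_one_sub k (by rwa [norm_norm] : ‖‖z‖‖ < 1)) fun n => ?_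
  rcases eq_or_ne n 0 with rfl | hn
  · simp
  have hpos : 0 < 1 - ‖z‖ ^ n := sub_pos.2 (pow_lt_one₀ (norm_nonneg z) hz hn)
  have hle : 1 - ‖z‖ ^ n ≤ ‖1 - z ^ n‖ := by
    simpa using norm_sub_norm_le 1 (z ^ n)
  rw [norm_div, norm_mul, norm_pow]
  gcongr
  exact hf n

lemma summable_prod_mul_pow_mul (hf : ∀ n, ‖f n‖ ≤ (n : ℝ) ^ k) (hz : ‖z‖ < 1) :
    Summable fun p : ℕ+ × ℕ+ => f p.1 * z ^ (p.1 * p.2 : ℕ) := by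
  refine .of_norm_bounded
    (summable_prod_mul_pow k (by rwa [norm_norm] : ‖‖z‖‖ < 1)).prod_symm fun p => ?_
  rw [norm_mul, norm_pow, Prod.fst_swap, Prod.snd_swap, mul_comm (p.2 : ℕ)]
  gcongr
  exact hf _

lemma tsum_prod_mul_pow_mul (hf : ∀ n, ‖f n‖ ≤ (n : ℝ) ^ k) (hz : ‖z‖ < 1) :
    ∑' p : ℕ+ × ℕ+, f p.1 * z ^ (p.1 * p.2 : ℕ) =
      ∑' n : ℕ+, (∑ d ∈ (n : ℕ).divisors, f d) * z ^ (n : ℕ) := by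
  have hsum := sigmaAntidiagonalEquivProd.summable_iff.2 (summable_prod_mul_pow_mul hf hz)
  rw [← sigmaAntidiagonalEquivProd.tsum_eq]
  refine hsum.tsum_sigma.trans (tsum_congr fun n => ?_)
  simp only [tsum_fintype, univ_eq_attach, sigmaAntidiagonalEquivProd, Equiv.coe_fn_mk,
    divisorsAntidiagonalFactors, PNat.mk_coe, Function.comp_apply]
  rw [(n : ℕ).divisorsAntidiagonal.sum_attach fun x : ℕ × ℕ => f x.1 * z ^ (x.1 * x.2),
    Nat.sum_divisorsAntidiagonal fun x y => f x * z ^ (x * y), sum_mul]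
  exact sum_congr rfl fun d hd => by
    rw [Nat.mul_div_cancel' (Nat.dvd_of_mem_divisors hd)]

-- Both sums may start at `n = 0`: on the left this term is `f 0 / 0 = 0`.
lemma tsum_lambert (hf : ∀ n, ‖f n‖ ≤ (n : ℝ) ^ k) (hz : ‖z‖ < 1) :
    ∑' n, f n * z ^ n / (1 - z ^ n) = ∑' n, (∑ d ∈ n.divisors, f d) * z ^ n := by
  have hpow := (summable_norm_mul_pow (norm_sum_divisors_le hf) hz).of_norm
  have hlambert := summable_lambert hf hz
  rw [← tsum_zero_pnat_eq_tsum_nat hlambert, ← tsum_zero_pnat_eq_tsum_nat hpow,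
    ← tsum_prod_mul_pow_mul hf hz, (summable_prod_mul_pow_mul hf hz).tsum_prod]
  simp only [tsum_pnat_mul_pow_mul _ hz, pow_zero, sub_self, div_zero, Nat.divisors_zero,
    sum_empty, zero_mul]

end Lambert

section PartitionProduct

variable {ι : Type*} {e : ι → ℕ}

lemma summable_pow_comp (he : e.Injective) {r : ℝ} (hr₀ : 0 ≤ r) (hr : r < 1) :
    Summable fun i => r ^ e i :=
  (summable_geometric_of_lt_one hr₀ hr).comp_injective he

lemma multipliable_one_sub_pow {R : Type*} [NormedCommRing R] [NormOneClass R] [CompleteSpace R]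
    (he : e.Injective) {z : R} (hz : ‖z‖ < 1) : Multipliable fun i => 1 - z ^ e i := by
  simp only [sub_eq_add_neg]
  refine multipliable_one_add_of_summable (.of_nonneg_of_le (fun _ => norm_nonneg _) (fun i => ?_)
    (summable_pow_comp he (norm_nonneg z) hz))
  rw [norm_neg]
  exact norm_pow_le z _

lemma tprod_one_sub_pow_ne_zero {𝕜 : Type*} [NormedField 𝕜] [CompleteSpace 𝕜] (he : e.Injective)
    (he₀ : ∀ i, e i ≠ 0) {z : 𝕜} (hz : ‖z‖ < 1) : ∏' i, (1 - z ^ e i) ≠ 0 := by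
  have hne (i : ι) : 1 + -z ^ e i ≠ 0 := by
    rw [← sub_eq_add_neg]
    exact one_sub_pow_ne_zero hz (he₀ i)
  simp only [sub_eq_add_neg]
  refine tprod_one_add_ne_zero_of_summable hne ?_
  simpa using summable_pow_comp he (norm_nonneg z) hz

lemma multipliableLocallyUniformlyOn_one_sub_pow (he : e.Injective) {r : ℝ} (hr₀ : 0 ≤ r)
    (hr : r < 1) :
    MultipliableLocallyUniformlyOn (fun i (z : ℂ) => 1 - z ^ e i) (Metric.ball 0 r) := by
  simp only [sub_eq_add_neg]
  refine (summable_pow_comp he hr₀ hr).multipliableLocallyUniformlyOn_one_add Metric.isOpen_ball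
    (.of_forall fun i z hz => ?_) fun i => by fun_prop
  rw [norm_neg, norm_pow]
  gcongr
  simpa using (Metric.mem_ball.1 hz).le

lemma differentiableAt_tprod_one_sub_pow (he : e.Injective) {z : ℂ} (hz : ‖z‖ < 1) :
    DifferentiableAt ℂ (fun w => ∏' i, (1 - w ^ e i)) z := by
  obtain ⟨r, hzr, hr⟩ := exists_between hz
  have hball : DifferentiableOn ℂ (fun w : ℂ => ∏' i, (1 - w ^ e i)) (Metric.ball 0 r) :=
    (multipliableLocallyUniformlyOn_one_sub_pow he ((norm_nonneg z).trans hzr.le)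
      hr).hasProdLocallyUniformlyOn.differentiableOn
      (.of_forall fun s => by fun_prop) Metric.isOpen_ball
  exact hball.differentiableAt (Metric.isOpen_ball.mem_nhds (by simpa using hzr))

lemma mul_logDeriv_one_sub_pow {𝕜 : Type*} [NontriviallyNormedField 𝕜] (m : ℕ) (z : 𝕜) :
    z * logDeriv (fun w : 𝕜 => 1 - w ^ m) z = -(m * z ^ m / (1 - z ^ m)) := by
  have hlog : logDeriv (fun w : 𝕜 => 1 - w ^ m) z = -(m * z ^ (m - 1)) / (1 - z ^ m) := by
    simp [logDeriv_apply]
  rw [hlog]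
  rcases m with - | m
  · simp
  · rw [Nat.add_sub_cancel, pow_succ]
    ring

lemma mul_logDeriv_tprod_one_sub_pow (he : e.Injective) (he₀ : ∀ i, e i ≠ 0) {z : ℂ}
    (hz : ‖z‖ < 1) :
    z * logDeriv (fun w => ∏' i, (1 - w ^ e i)) z = -∑' i, e i * z ^ e i / (1 - z ^ e i) := by
  rcases eq_or_ne z 0 with rfl | hz₀
  · simp [he₀]
  obtain ⟨r, hzr, hr⟩ := exists_between hz
  have hsum : Summable fun i => logDeriv (fun w : ℂ => 1 - w ^ e i) z := by
    rw [← summable_mul_left_iff hz₀]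
    simp only [mul_logDeriv_one_sub_pow]
    exact ((summable_lambert (f := fun n => (n : ℂ)) (k := 1) (by simp) hz).comp_injective he).neg
  have hlog := logDeriv_tprod_eq_tsum (f := fun i (w : ℂ) => 1 - w ^ e i) Metric.isOpen_ball
    (mem_ball_zero_iff.2 hzr) (fun i => one_sub_pow_ne_zero hz (he₀ i)) (fun i => by fun_prop) hsum
    (multipliableLocallyUniformlyOn_one_sub_pow he ((norm_nonneg z).trans hzr.le) hr)
    (tprod_one_sub_pow_ne_zero he he₀ hz)
  rw [hlog, ← tsum_mul_left, ← tsum_neg]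
  exact tsum_congr fun i => mul_logDeriv_one_sub_pow _ _

/-- The generating function of the partitions whose parts are values of the injective family `e`. -/
noncomputable def partitionProduct (e : ι → ℕ) (q : ℂ) : ℂ := ∏' i, (1 - q ^ e i)⁻¹

lemma partitionProduct_eq_inv (he : e.Injective) (he₀ : ∀ i, e i ≠ 0) {q : ℂ} (hq : ‖q‖ < 1) :
    partitionProduct e q = (∏' i, (1 - q ^ e i))⁻¹ :=
  (multipliable_one_sub_pow he hq).tprod_inv₀ (tprod_one_sub_pow_ne_zero he he₀ hq)

lemma eventually_norm_lt_one {E : Type*} [SeminormedAddCommGroup E] {q : E} (hq : ‖q‖ < 1) :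
    ∀ᶠ z in nhds q, ‖z‖ < 1 :=
  continuous_norm.continuousAt.eventually_lt_const hq

lemma partitionProduct_eventuallyEq (he : e.Injective) (he₀ : ∀ i, e i ≠ 0) {q : ℂ}
    (hq : ‖q‖ < 1) :
    partitionProduct e =ᶠ[nhds q] fun z => (∏' i, (1 - z ^ e i))⁻¹ :=
  (eventually_norm_lt_one hq).mono fun _ => partitionProduct_eq_inv he he₀

lemma differentiableAt_partitionProduct (he : e.Injective) (he₀ : ∀ i, e i ≠ 0) {q : ℂ}
    (hq : ‖q‖ < 1) : DifferentiableAt ℂ (partitionProduct e) q :=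
  (partitionProduct_eventuallyEq he he₀ hq).differentiableAt_iff.2
    ((differentiableAt_tprod_one_sub_pow he hq).fun_inv (tprod_one_sub_pow_ne_zero he he₀ hq))

lemma mul_deriv_partitionProduct (he : e.Injective) (he₀ : ∀ i, e i ≠ 0) {q : ℂ} (hq : ‖q‖ < 1) :
    q * deriv (partitionProduct e) q =
      (∑' n, (∑ d ∈ n.divisors, (Set.range e).indicator (fun m => (m : ℂ)) d) * q ^ n) *
        partitionProduct e q := by
  have hbound (n : ℕ) : ‖(Set.range e).indicator (fun m => (m : ℂ)) n‖ ≤ (n : ℝ) ^ 1 :=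
    (norm_indicator_le_norm_self _ _).trans (by simp)
  have hlambert : ∑' i, e i * q ^ e i / (1 - q ^ e i) =
      ∑' n, (∑ d ∈ n.divisors, (Set.range e).indicator (fun m => (m : ℂ)) d) * q ^ n := by
    rw [← tsum_lambert hbound hq, ← tsum_range (fun n : ℕ => n * q ^ n / (1 - q ^ n)) he,
      tsum_subtype (Set.range e) fun n : ℕ => n * q ^ n / (1 - q ^ n)]
    exact tsum_congr fun n => by by_cases h : n ∈ Set.range e <;> simp [h]
  have hne := tprod_one_sub_pow_ne_zero he he₀ hq
  have hlog := mul_logDeriv_tprod_one_sub_pow he he₀ hq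
  rw [logDeriv_apply, hlambert] at hlog
  rw [(partitionProduct_eventuallyEq he he₀ hq).deriv_eq, partitionProduct_eq_inv he he₀ hq,
    deriv_fun_inv'' (differentiableAt_tprod_one_sub_pow he hq) hne, ← neg_eq_iff_eq_neg.2 hlog]
  field_simp

end PartitionProduct

section Product

/-- The exponents `5 n + 2` and `5 n + 3` of the product, indexed by `n` and by the residue. -/
def partSize (p : ℕ × Fin 2) : ℕ := 5 * p.1 + 2 + p.2

lemma partSize_injective : partSize.Injective := fun ⟨m, i⟩ ⟨n, j⟩ h => by
  simp only [partSize] at h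
  simp only [Prod.mk.injEq, Fin.ext_iff]
  omega

lemma partSize_ne_zero (p : ℕ × Fin 2) : partSize p ≠ 0 := by
  simp [partSize]

lemma mem_range_partSize {n : ℕ} : n ∈ Set.range partSize ↔ n % 5 = 2 ∨ n % 5 = 3 := by
  constructor
  · rintro ⟨⟨m, i⟩, rfl⟩
    simp only [partSize]
    omega
  · rintro (h | h)
    · exact ⟨(n / 5, 0), by simp only [partSize, Fin.val_zero]; omega⟩
    · exact ⟨(n / 5, 1), by simp only [partSize, Fin.val_one]; omega⟩

lemma chi_natCast (n : ℕ) : chi n = if n % 5 = 2 ∨ n % 5 = 3 then 1 else 0 := by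
  have hn : n % 5 < 5 := Nat.mod_lt _ (by norm_num)
  rw [← ZMod.natCast_mod n 5]
  generalize n % 5 = r at hn
  interval_cases r <;> simp +decide

lemma indicator_range_partSize (n : ℕ) :
    (Set.range partSize).indicator (fun m => (m : ℂ)) n = (chi n * n : ℤ) := by
  rw [chi_natCast]
  by_cases h : n ∈ Set.range partSize
  · simp [Set.indicator_of_mem h, mem_range_partSize.1 h]
  · simp [Set.indicator_of_notMem h, mt mem_range_partSize.2 h]

lemma partitionProduct_partSize {q : ℂ} (hq : ‖q‖ < 1) :
    partitionProduct partSize q =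
      ∏' n : ℕ, ((1 - q ^ (5 * n + 2)) * (1 - q ^ (5 * n + 3)))⁻¹ := by
  have hinv : Multipliable fun p => (1 - q ^ partSize p)⁻¹ :=
    (multipliable_one_sub_pow partSize_injective hq).inv₀
      (tprod_one_sub_pow_ne_zero partSize_injective partSize_ne_zero hq)
  rw [partitionProduct, hinv.tprod_prod' fun _ => .of_finite]
  refine tprod_congr fun n => ?_
  rw [tprod_fintype, Fin.prod_univ_two, ← mul_inv]
  rfl

end Product

section Series

open Finset
open scoped ArithmeticFunction.sigma

/-- The power series `∑ twistedSigma n * q ^ n`, which is the logarithmic derivative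
`q F' / F` of the product `F` over the parts congruent to `2` or `3` modulo `5`. -/
noncomputable def twistedSigmaSeries (q : ℂ) : ℂ := ∑' n, (twistedSigma n : ℂ) * q ^ n

/-- The power series `∑ σ_k(n) q ^ n`. -/
noncomputable def sigmaSeries (k : ℕ) (q : ℂ) : ℂ := ∑' n, (σ k n : ℂ) * q ^ n

lemma norm_twistedSigma_le (n : ℕ) : ‖(twistedSigma n : ℂ)‖ ≤ (n : ℝ) ^ 2 := by
  rw [twistedSigma, Int.cast_sum]
  refine norm_sum_divisors_le (fun d => ?_) n
  rw [chi_natCast]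
  split_ifs <;> simp

lemma norm_sigma_le (k n : ℕ) : ‖(σ k n : ℂ)‖ ≤ (n : ℝ) ^ (k + 1) := by
  rw [Complex.norm_natCast]
  exact_mod_cast ArithmeticFunction.sigma_le_pow_succ k n

lemma differentiableAt_twistedSigmaSeries {q : ℂ} (hq : ‖q‖ < 1) :
    DifferentiableAt ℂ twistedSigmaSeries q :=
  (hasDerivAt_tsum_mul_pow norm_twistedSigma_le hq).differentiableAt

lemma mul_deriv_partitionProduct_partSize {q : ℂ} (hq : ‖q‖ < 1) :
    q * deriv (partitionProduct partSize) q =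
      twistedSigmaSeries q * partitionProduct partSize q := by
  rw [mul_deriv_partitionProduct partSize_injective partSize_ne_zero hq]
  simp only [indicator_range_partSize, twistedSigmaSeries, twistedSigma, Int.cast_sum]

lemma hasSum_sum_divisors_succ_pow_mul_pow (k : ℕ) {q : ℂ} (hq : ‖q‖ < 1) :
    HasSum (fun n : ℕ => (∑ d ∈ (n + 1).divisors, (d : ℂ) ^ k) * q ^ (n + 1))
      (sigmaSeries k q) := by
  have hsum := (summable_norm_mul_pow (norm_sigma_le k) hq).of_norm.hasSum
  simpa [sigmaSeries, ArithmeticFunction.sigma_apply] using (hasSum_nat_add_iff' 1).2 hsum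

lemma hasSum_mul_deriv_twistedSigmaSeries {q : ℂ} (hq : ‖q‖ < 1) :
    HasSum (fun n : ℕ => n * (twistedSigma n : ℂ) * q ^ n) (q * deriv twistedSigmaSeries q) := by
  have hbound (n : ℕ) : ‖n * (twistedSigma n : ℂ)‖ ≤ (n : ℝ) ^ 3 := by
    rw [norm_mul, Complex.norm_natCast, pow_succ']
    gcongr
    exact norm_twistedSigma_le n
  have hderiv : q * deriv twistedSigmaSeries q = ∑' n, n * (twistedSigma n : ℂ) * q ^ n :=
    mul_deriv_tsum_mul_pow norm_twistedSigma_le hq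
  rw [hderiv]
  exact (summable_norm_mul_pow hbound hq).of_norm.hasSum

theorem twistedSigmaSeries_riccati {q : ℂ} (hq : ‖q‖ < 1) :
    q * deriv twistedSigmaSeries q + twistedSigmaSeries q ^ 2
      + (1 / 5 + 4 * sigmaSeries 1 q) * twistedSigmaSeries q
      + 11 / 15 * (sigmaSeries 1 q - sigmaSeries 3 q) = 0 := by
  have hτ := summable_norm_mul_pow norm_twistedSigma_le hq
  have hσ (k : ℕ) := summable_norm_mul_pow (norm_sigma_le k) hq
  have htotal : HasSum _ (_ + twistedSigmaSeries q * twistedSigmaSeries q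
      + (1 / 5 * twistedSigmaSeries q + 4 * (sigmaSeries 1 q * twistedSigmaSeries q))
      + 11 / 15 * (sigmaSeries 1 q - sigmaSeries 3 q)) :=
    (((hasSum_mul_deriv_twistedSigmaSeries hq).add (hasSum_sum_antidiagonal_mul_pow hτ hτ)).add
      ((hτ.of_norm.hasSum.mul_left _).add
        ((hasSum_sum_antidiagonal_mul_pow (hσ 1) hτ).mul_left _))).add
      (((hσ 1).of_norm.hasSum.sub (hσ 3).of_norm.hasSum).mul_left _)
  have hzero := hasSum_zero.unique (htotal.congr_fun fun n => by
    have hcoeff := congrArg (Int.cast : ℤ → ℂ) (twistedSigma_riccati n)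
    push_cast at hcoeff
    linear_combination -(q ^ n / 15 * hcoeff))
  linear_combination -hzero

lemma mul_deriv_mul_deriv_of_eventuallyEq {𝕜 : Type*} [NontriviallyNormedField 𝕜] {F h : 𝕜 → 𝕜}
    {q : 𝕜} (hF : (fun z => z * deriv F z) =ᶠ[nhds q] fun z => h z * F z)
    (hh : DifferentiableAt 𝕜 h q) (hF_diff : DifferentiableAt 𝕜 F q) :
    q * deriv (fun z => z * deriv F z) q = (q * deriv h q + h q ^ 2) * F q := by
  rw [hF.deriv_eq, deriv_fun_mul hh hF_diff]
  linear_combination h q * hF.eq_of_nhds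

end Series

end RogersRamanujan

/-- The Rogers–Ramanujan product `L₁(q) = ∏_{n≥0} 1/((1-q^{5n+2})(1-q^{5n+3}))`
satisfies `(qd/dq)²F + (1/5 + 4∑σ₁(n)qⁿ)(qd/dq)F + (11/15)∑(σ₁(n)-σ₃(n))qⁿ · F = 0`. -/
theorem RR_product_L1_ODE (L₁ : ℂ → ℂ)
    (hL : L₁ = fun q : ℂ => ∏' n : ℕ, ((1 - q ^ (5 * n + 2)) * (1 - q ^ (5 * n + 3)))⁻¹)
    (D : (ℂ → ℂ) → (ℂ → ℂ)) (hD : D = fun F => fun q => q * deriv F q)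
    (q : ℂ) (hq : ‖q‖ < 1) :
    D (D L₁) q
      + (1 / 5 + 4 * ∑' n : ℕ, (∑ d ∈ (n + 1).divisors, (d : ℂ)) * q ^ (n + 1)) * D L₁ q
      + 11 / 15 * (∑' n : ℕ,
          ((∑ d ∈ (n + 1).divisors, (d : ℂ)) - ∑ d ∈ (n + 1).divisors, (d : ℂ) ^ 3)
            * q ^ (n + 1)) * L₁ q = 0 := by
  open RogersRamanujan in
  have hprod {z : ℂ} (hz : ‖z‖ < 1) : L₁ =ᶠ[nhds z] partitionProduct partSize := by
    filter_upwards [eventually_norm_lt_one hz] with w hw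
    rw [hL, partitionProduct_partSize hw]
  have hdiff : DifferentiableAt ℂ L₁ q := (hprod hq).differentiableAt_iff.2
    (differentiableAt_partitionProduct partSize_injective partSize_ne_zero hq)
  have hD₁ {z : ℂ} (hz : ‖z‖ < 1) : z * deriv L₁ z = twistedSigmaSeries z * L₁ z := by
    rw [(hprod hz).deriv_eq, (hprod hz).eq_of_nhds, mul_deriv_partitionProduct_partSize hz]
  have hD₂ : q * deriv (fun z => z * deriv L₁ z) q =
      (q * deriv twistedSigmaSeries q + twistedSigmaSeries q ^ 2) * L₁ q :=
    mul_deriv_mul_deriv_of_eventuallyEq ((eventually_norm_lt_one hq).mono fun _ => hD₁)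
      (differentiableAt_twistedSigmaSeries hq) hdiff
  have hσ (k : ℕ) := hasSum_sum_divisors_succ_pow_mul_pow k hq
  have hσ₁ := (hσ 1).tsum_eq
  have hσ₁₃ := ((hσ 1).sub (hσ 3)).tsum_eq
  simp only [pow_one, ← sub_mul] at hσ₁ hσ₁₃
  simp only [hD, hD₂, hD₁ hq, hσ₁, hσ₁₃]
  linear_combination L₁ q * twistedSigmaSeries_riccati hq
end
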